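/- Let E be a second-countable topological graph, β ∈ ℝ, and μ a β-sub-invariant regular Borel measure on E⁰ (Tμ ≤ e^β μ, with equality on E⁰_reg). Define μ₀ = μ on ∂E₀ = E⁰ and recursively, on the n-th boundary path space ∂E_n, set μ_n = e^{−β} σ*μ_{n−1} + μ|_{E⁰_sng} − e^{−β}(Tμ)|_{E⁰_sng}. Then each μ_n is a (nonnegative) regular Borel measure on ∂E_n and (ρ_n)_* μ_n = μ_{n−1} for all n ≥ 1, where ρ_n : ∂E_n → ∂E_{n−1} truncates paths of length n to length n−1 and is the identity on shorter paths. -/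

import Mathlib

/-!
Why the measures `μₙ` exist and are consistent.

Write `c = e^{-β}`. As `c Tμ ≤ μ` and `μ` is `σ`-finite, there is a measure `m` on `E⁰` with
`m + c Tμ = μ`, and `m` gives no mass to the regular vertices because `c Tμ = μ` there
(`exists_defect`). The shift `σ` is a local homeomorphism on the paths of positive length in `E*`,
with injectivity domains `{p | p₁ ∈ W i}` for a countable open cover `W` of `E` by sets on which
`s` is injective. So measures on `E*` can be pulled back along `σ`, and all the `μₙ` can be
constructed on the one space `E*`:
`μ₀ = μ` and `μₙ₊₁ = c σ*μₙ + m` (`pathMeas`). The measure `μₙ` is carried by `∂Eₙ ⊆ E*`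
(`pathMeas_compl_carrier`), so nothing is lost by restricting it to `∂Eₙ` at the end.

On `E*` the map `ρₙ` becomes the truncation `p ↦ p(n)`. The square

* `p ↦ p(k+1)` followed by `σ`, and
* `σ` followed by `q ↦ q(k)`

is cartesian on paths of positive length (`shiftF_image_trunc_preimage`), hence pulling back along
`σ` commutes with pushing forward along truncations (`map_trunc_shiftPull`). This gives the
inductive step of `(ρₙ)_* μₙ₊₁ = μₙ`; the initial step is `c Tμ + m = μ` (`map_trunc_pathMeas`).

To pass from `E*` to `∂Eₙ`, whose topology is generated by the sets `Z(U) \ Z(K)`, two facts are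
needed. The space `∂Eₙ` is second countable, locally compact and Hausdorff: cylinders over compact
sets are compact by an ultrafilter argument in which the definition of regular vertices enters
(`isCompact_ZNSet`). Moreover `∂Eₙ` has the Borel structure induced from `E*`, although not the
induced topology (`measurableEmbedding_incl`). On such a space regularity amounts to local
finiteness, which holds because a path `x` of length `k` has a neighbourhood `Z(O)` with `O ⊆ Eᵏ`
open, and, by consistency, `μₙ(Z(O)) ≤ μₖ(O)`, which is finite for `O` small
(`exists_open_pathMeas_lt_top`).
-/

open MeasureTheory Set

namespace TopGraph

universe u
variable {V E : Type u} (r s : E → V)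

/-- Composability of a tuple of edges: the source of each edge is the range of the next. -/
def Comp (n : ℕ) (a : Fin n → E) : Prop :=
  ∀ i j : Fin n, (j : ℕ) = (i : ℕ) + 1 → s (a i) = r (a j)

/-- The space `E^n` of paths of length `n`; `E^0` is the vertex space `V`. -/
def PathN : ℕ → Type u
  | 0 => V
  | n + 1 => {a : Fin (n + 1) → E // Comp r s (n + 1) a}

/-- The space `E^∞` of infinite paths. -/
def PathInf : Type u := {a : ℕ → E // ∀ i : ℕ, s (a i) = r (a (i + 1))}

/-- The edges of a finite path. -/
def edgeOf : ∀ {n : ℕ}, PathN r s n → Fin n → E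
  | 0, _, i => absurd i.isLt (by omega)
  | _ + 1, q, i => q.1 i

/-- The source of a finite path (for a vertex, the vertex itself). -/
def srcFin : ∀ {n : ℕ}, PathN r s n → V
  | 0, v => v
  | n + 1, q => s (q.1 ⟨n, Nat.lt_succ_self n⟩)

/-- The range of a finite path (for a vertex, the vertex itself). -/
def rngFin : ∀ {n : ℕ}, PathN r s n → V
  | 0, v => v
  | n + 1, q => r (q.1 ⟨0, Nat.succ_pos n⟩)

/-- Truncation `a ↦ a(n)` of a finite path, with `a(0) = r(a)`. -/
def truncFin : ∀ {m n : ℕ}, n ≤ m → PathN r s m → PathN r s n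
  | 0, 0, _, q => q
  | _ + 1, 0, _, q => r (q.1 ⟨0, Nat.succ_pos _⟩)
  | 0, _ + 1, h, _ => absurd h (by omega)
  | _ + 1, _ + 1, h, q =>
    ⟨fun i => q.1 (Fin.castLE h i), fun i j hij =>
      q.2 (Fin.castLE h i) (Fin.castLE h j) (by simpa using hij)⟩

/-- Truncation `a ↦ a(n)` of an infinite path. -/
def truncInf (a : PathInf r s) : ∀ n : ℕ, PathN r s n
  | 0 => r (a.1 0)
  | n + 1 => ⟨fun i => a.1 i, fun i j hij => by
      show s (a.1 (i : ℕ)) = r (a.1 (j : ℕ))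
      rw [hij]
      exact a.2 (i : ℕ)⟩

/-- The finite path space `E* = ⊔ₙ E^n`. -/
def FinPath : Type u := Σ n : ℕ, PathN r s n

/-- Truncation of a finite path, as a map of `E*`. -/
def ftrunc (p : FinPath r s) (k : ℕ) (h : k ≤ p.1) : FinPath r s :=
  ⟨k, truncFin r s h p.2⟩

section Topology

variable [TopologicalSpace V] [TopologicalSpace E]

instance instTopPathN : ∀ n : ℕ, TopologicalSpace (PathN r s n)
  | 0 => (inferInstance : TopologicalSpace V)
  | n + 1 => (inferInstance : TopologicalSpace {a : Fin (n + 1) → E // Comp r s (n + 1) a})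

noncomputable instance instMeasPathN (n : ℕ) : MeasurableSpace (PathN r s n) := borel _

instance instTopPathInf : TopologicalSpace (PathInf r s) :=
  (inferInstance : TopologicalSpace {a : ℕ → E // ∀ i : ℕ, s (a i) = r (a (i + 1))})

instance instTopFinPath : TopologicalSpace (FinPath r s) :=
  (inferInstance : TopologicalSpace (Σ n : ℕ, PathN r s n))

/-- A vertex is regular if it has a relatively compact open neighborhood `U` with
`r⁻¹(cl U)` compact and `r(r⁻¹(U)) = U`. -/
def RegularVertex (v : V) : Prop :=
  ∃ U : Set V, IsOpen U ∧ v ∈ U ∧ IsCompact (closure U) ∧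
    IsCompact (r ⁻¹' closure U) ∧ r '' (r ⁻¹' U) = U

/-- The carrier of the boundary path space: finite or infinite paths. -/
def BPathCarrier : Type u := FinPath r s ⊕ PathInf r s

/-- Length of a (possibly infinite) path, in `ℕ∞`. -/
def blen : BPathCarrier r s → ℕ∞
  | .inl p => (p.1 : ℕ∞)
  | .inr _ => ⊤

/-- Truncation `a ↦ a(n)` of a boundary path, `n ≤ |a|`, valued in `E*`. -/
def btrunc : ∀ (x : BPathCarrier r s) (n : ℕ), (n : ℕ∞) ≤ blen r s x → FinPath r s
  | .inl p, n, h => ftrunc r s p n (by simpa [blen] using h)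
  | .inr a, n, _ => ⟨n, truncInf r s a n⟩

/-- The boundary path space `∂E`: singular finite paths together with infinite paths. -/
def BPath : Type u :=
  {x : BPathCarrier r s //
    ∀ p : FinPath r s, x = Sum.inl p → ¬ RegularVertex r (srcFin r s p.2)}

/-- The cylinder sets `Z(S) = {a ∈ ∂E : a(n) ∈ S for some n ≤ |a|}`. -/
def ZSet (S : Set (FinPath r s)) : Set (BPath r s) :=
  {x | ∃ (n : ℕ) (h : (n : ℕ∞) ≤ blen r s x.val), btrunc r s x.val n h ∈ S}

/-- The topology on `∂E` generated by the base `{Z(U) \ Z(K) : U open, K compact}`. -/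
instance instTopBPath : TopologicalSpace (BPath r s) :=
  TopologicalSpace.generateFrom
    {A | ∃ (U K : Set (FinPath r s)), IsOpen U ∧ IsCompact K ∧
      A = ZSet r s U \ ZSet r s K}

noncomputable instance instMeasBPath : MeasurableSpace (BPath r s) := borel _

end Topology

/-- The backwards shift on finite paths (acting as the identity on vertices). -/
def shiftF : FinPath r s → FinPath r s
  | ⟨0, v⟩ => ⟨0, v⟩
  | ⟨1, q⟩ => ⟨0, (s (q.1 ⟨0, Nat.one_pos⟩) : PathN r s 0)⟩
  | ⟨n + 2, q⟩ =>
    ⟨n + 1, ⟨fun i => q.1 i.succ, fun i j hij =>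
      q.2 i.succ j.succ (by simp [Fin.val_succ, hij])⟩⟩

/-- The backwards shift on the boundary path carrier. -/
def shiftC : BPathCarrier r s → BPathCarrier r s
  | .inl p => .inl (shiftF r s p)
  | .inr a => .inr ⟨fun i => a.1 (i + 1), fun i => a.2 (i + 1)⟩

section Vertex

variable [TopologicalSpace V] [TopologicalSpace E]

/-- The set of vertices `E⁰ ⊆ ∂E`. -/
def VtxSet : Set (BPath r s) := {x | ∃ v : V, x.val = Sum.inl ⟨0, (v : PathN r s 0)⟩}

/-- The range map `r : ∂E → E⁰`. -/
def brng (x : BPath r s) : V :=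
  match x.val with
  | .inl p => rngFin r s p.2
  | .inr a => r (a.1 0)

end Vertex

section Measures

variable [TopologicalSpace V] [TopologicalSpace E]
variable [MeasurableSpace V] [MeasurableSpace E]

/-- `ν` is the (sheaf-theoretic) pullback of `μ` along `f`. -/
def IsPullback {X Y : Type*} [TopologicalSpace X] [TopologicalSpace Y]
    [MeasurableSpace X] [MeasurableSpace Y] (f : X → Y)
    (ν : Measure X) (μ : Measure Y) : Prop :=
  ∀ U : Set X, IsOpen U → Set.InjOn f U →
    ∀ B : Set X, B ⊆ U → MeasurableSet B → ν B = μ (f '' B)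

/-- A measure `ν` on `∂E` is `β`-quasi-invariant: `σ*ν = e^β ν` on `∂E \ E⁰`, i.e.
`ν(B) = e^{-β} ν(σ(B))` for Borel `B` inside an open set `U ⊆ ∂E \ E⁰` on which `σ`
is injective. -/
def QuasiInv (β : ℝ) (ν : Measure (BPath r s)) : Prop :=
  ∀ U : Set (BPath r s), IsOpen U → Disjoint U (VtxSet r s) →
    Set.InjOn (fun x : BPath r s => shiftC r s x.val) U →
    ∀ B : Set (BPath r s), B ⊆ U → MeasurableSet B →
      ν B = ENNReal.ofReal (Real.exp (-β)) *
        ν (Subtype.val ⁻¹' (shiftC r s '' (Subtype.val '' B)))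

/-- A regular Borel measure `μ` on `E⁰` is `β`-sub-invariant: `Tμ ≤ e^β μ` with equality on
the regular vertices, where `T = r_* s*`. -/
def SubInv (β : ℝ) (μ : Measure V) : Prop :=
  μ.Regular ∧ ∃ sμ : Measure E, sμ.Regular ∧ IsPullback s sμ μ ∧
    Measure.map r sμ ≤ ENNReal.ofReal (Real.exp β) • μ ∧
    ∀ B : Set V, MeasurableSet B → (∀ v ∈ B, RegularVertex r v) →
      Measure.map r sμ B = ENNReal.ofReal (Real.exp β) * μ B

end Measures

section BPathN

variable [TopologicalSpace V] [TopologicalSpace E]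

/-- The `n`-th boundary path space `∂Eₙ = E⁰_sng ⊔ ⋯ ⊔ E^{n-1}_sng ⊔ E^n`. -/
def BPathN (n : ℕ) : Type u :=
  {p : FinPath r s // p.1 ≤ n ∧ (p.1 < n → ¬ RegularVertex r (srcFin r s p.2))}

/-- Cylinder sets in `∂Eₙ`. -/
def ZNSet (n : ℕ) (S : Set (FinPath r s)) : Set (BPathN r s n) :=
  {x | ∃ (k : ℕ) (h : k ≤ x.val.1), ftrunc r s x.val k h ∈ S}

instance instTopBPathN (n : ℕ) : TopologicalSpace (BPathN r s n) :=
  TopologicalSpace.generateFrom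
    {A | ∃ (U K : Set (FinPath r s)), IsOpen U ∧ IsCompact K ∧
      A = ZNSet r s n U \ ZNSet r s n K}

noncomputable instance instMeasBPathN (n : ℕ) : MeasurableSpace (BPathN r s n) := borel _

/-- The map `ρₙ : ∂Eₙ₊₁ → ∂Eₙ`, truncating paths of length `n+1` and fixing shorter paths. -/
def rho (n : ℕ) (x : BPathN r s (n + 1)) : BPathN r s n :=
  if h : x.val.1 = n + 1 then
    ⟨ftrunc r s x.val n (by omega), ⟨le_refl n, fun hlt => absurd hlt (lt_irrefl n)⟩⟩
  else
    ⟨x.val, ⟨by have := x.property.1; omega, fun hlt => x.property.2 (by omega)⟩⟩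

end BPathN

/-- The periodicity group of a boundary path. -/
def Per (x : BPathCarrier r s) : Set ℤ :=
  {z | ∃ k l : ℕ, (k : ℕ∞) ≤ blen r s x ∧ (l : ℕ∞) ≤ blen r s x ∧
    z = (k : ℤ) - (l : ℤ) ∧ (shiftC r s)^[k] x = (shiftC r s)^[l] x}

section Gpd

variable [TopologicalSpace V] [TopologicalSpace E]

/-- The graph groupoid `𝒢_E`, as a set of triples. -/
def GraphGpd : Set (BPath r s × ℤ × BPath r s) :=
  {t | ∃ k l : ℕ, (k : ℕ∞) ≤ blen r s t.1.val ∧ (l : ℕ∞) ≤ blen r s t.2.2.val ∧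
    t.2.1 = (k : ℤ) - (l : ℤ) ∧ (shiftC r s)^[k] t.1.val = (shiftC r s)^[l] t.2.2.val}

end Gpd

/-- The infinite path `c^∞` obtained by repeating a cycle `c`. -/
def cycInf {m : ℕ} (c : PathN r s (m + 1)) (hc : rngFin r s c = srcFin r s c) :
    PathInf r s :=
  ⟨fun i => c.1 ⟨i % (m + 1), Nat.mod_lt i (Nat.succ_pos m)⟩, by
    intro i
    have hlt : i % (m + 1) < m + 1 := Nat.mod_lt i (Nat.succ_pos m)
    show s (c.1 ⟨i % (m + 1), Nat.mod_lt i (Nat.succ_pos m)⟩) =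
      r (c.1 ⟨(i + 1) % (m + 1), Nat.mod_lt (i + 1) (Nat.succ_pos m)⟩)
    by_cases h1 : i % (m + 1) < m
    · have key : (i + 1) % (m + 1) = i % (m + 1) + 1 := by
        conv_lhs => rw [← Nat.div_add_mod i (m + 1)]
        rw [Nat.add_assoc, Nat.mul_add_mod, Nat.mod_eq_of_lt (by omega)]
      exact c.2 _ _ key
    · have h2 : i % (m + 1) = m := by omega
      have key : (i + 1) % (m + 1) = 0 := by
        conv_lhs => rw [← Nat.div_add_mod i (m + 1)]
        rw [Nat.add_assoc, Nat.mul_add_mod, h2, Nat.mod_self]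
      have e1 : (⟨i % (m + 1), Nat.mod_lt i (Nat.succ_pos m)⟩ : Fin (m + 1)) =
          ⟨m, Nat.lt_succ_self m⟩ := Fin.ext h2
      have e2 : (⟨(i + 1) % (m + 1), Nat.mod_lt (i + 1) (Nat.succ_pos m)⟩ : Fin (m + 1)) =
          ⟨0, Nat.succ_pos m⟩ := Fin.ext key
      rw [e1, e2]
      exact hc.symm⟩

/-- Prepending a finite path `b` to an infinite path `d` with `s(b) = r(d)`. -/
def prepend : ∀ {n : ℕ} (b : PathN r s n) (d : PathInf r s),
    srcFin r s b = r (d.1 0) → PathInf r s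
  | 0, _, d, _ => d
  | n + 1, b, d, h =>
    ⟨fun i => if h' : i < n + 1 then b.1 ⟨i, h'⟩ else d.1 (i - (n + 1)), by
      intro i
      show s (if h' : i < n + 1 then b.1 ⟨i, h'⟩ else d.1 (i - (n + 1))) =
        r (if h' : i + 1 < n + 1 then b.1 ⟨i + 1, h'⟩ else d.1 (i + 1 - (n + 1)))
      by_cases h1 : i + 1 < n + 1
      · rw [dif_pos (by omega : i < n + 1), dif_pos h1]
        exact b.2 ⟨i, by omega⟩ ⟨i + 1, h1⟩ rfl
      · by_cases h2 : i < n + 1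
        · rw [dif_pos h2, dif_neg h1]
          have hi : i = n := by omega
          have h0 : i + 1 - (n + 1) = 0 := by omega
          have e : (⟨i, h2⟩ : Fin (n + 1)) = ⟨n, Nat.lt_succ_self n⟩ := Fin.ext hi
          rw [h0, e]
          exact h
        · rw [dif_neg h2, dif_neg h1]
          have h3 : i + 1 - (n + 1) = (i - (n + 1)) + 1 := by omega
          rw [h3]
          exact d.2 (i - (n + 1))⟩

/-- `b` ends with `c`: `b = a·c` for some finite path `a`. -/
def EndsWith {n m : ℕ} (b : PathN r s n) (c : PathN r s m) : Prop :=
  ∃ h : m ≤ n, ∀ i : Fin m,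
    edgeOf r s b ⟨n - m + (i : ℕ), by have := i.isLt; omega⟩ = edgeOf r s c i

/-- `x` is eventually cyclic with cycle of length `m + 1`: `x = b c^∞` for a cycle `c` of
length `m+1` and an exit `b` of `c`. -/
def EvCyclicWitness (x : BPathCarrier r s) (m : ℕ) : Prop :=
  ∃ (c : PathN r s (m + 1)) (hc : rngFin r s c = srcFin r s c)
    (k : ℕ) (b : PathN r s k)
    (hlink : srcFin r s b = r ((cycInf r s c hc).1 0)),
    srcFin r s b = rngFin r s c ∧ ¬ EndsWith r s b c ∧
    x = Sum.inr (prepend r s b (cycInf r s c hc) hlink)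

/-! ### Pullbacks and differences of measures -/

section Measure

open scoped ENNReal

/-- A continuous map which is injective on a Borel set `B` maps `B` to a Borel set. Polishness of
`X` is only needed on compact pieces, so `σ`-compactness of the metrizable space `X` suffices. -/
lemma measurableSet_image {X Y : Type*} [TopologicalSpace X] [TopologicalSpace.MetrizableSpace X]
    [SigmaCompactSpace X] [MeasurableSpace X] [BorelSpace X]
    [TopologicalSpace Y] [T2Space Y] [SecondCountableTopology Y]
    [MeasurableSpace Y] [BorelSpace Y]
    {f : X → Y} (hf : Continuous f) {B : Set X} (hB : MeasurableSet B) (hi : InjOn f B) :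
    MeasurableSet (f '' B) := by
  have h1 : f '' B = ⋃ n, (fun x : compactCovering X n => f x) '' (Subtype.val ⁻¹' B) := by
    ext y
    simp only [mem_image, mem_iUnion, mem_preimage]
    constructor
    · rintro ⟨x, hx, rfl⟩
      obtain ⟨n, hn⟩ := mem_iUnion.1 ((iUnion_compactCovering X).symm ▸ mem_univ x)
      exact ⟨n, ⟨x, hn⟩, hx, rfl⟩
    · rintro ⟨n, x, hx, rfl⟩
      exact ⟨x, hx, rfl⟩
  rw [h1]
  refine MeasurableSet.iUnion fun n => ?_
  have : CompactSpace (compactCovering X n) :=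
    isCompact_iff_compactSpace.1 (isCompact_compactCovering X n)
  let := TopologicalSpace.metrizableSpaceMetric (compactCovering X n)
  have : PolishSpace (compactCovering X n) := inferInstance
  refine MeasurableSet.image_of_continuousOn_injOn
    (measurable_subtype_coe hB) (by fun_prop) ?_
  intro x hx y hy hxy
  exact Subtype.ext (hi hx hy hxy)

/-- The difference of two measures `ν ≤ μ` exists when `μ` is `σ`-finite. -/
lemma exists_add_eq {X : Type*} [MeasurableSpace X] {ν μ : Measure X} [SigmaFinite μ]
    (h : ν ≤ μ) : ∃ m : Measure X, m + ν = μ := by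
  have : SigmaFinite ν := Measure.sigmaFinite_of_le μ h
  have hf := Measure.measurable_rnDeriv ν μ
  have hac : ν ≪ μ := Measure.absolutelyContinuous_of_le h
  refine ⟨μ.withDensity (fun x => 1 - ν.rnDeriv μ x), ?_⟩
  conv_lhs => enter [2]; rw [← Measure.withDensity_rnDeriv_eq ν μ hac]
  rw [← MeasureTheory.withDensity_add_right _ hf]
  have : (fun x => 1 - ν.rnDeriv μ x) + ν.rnDeriv μ =ᵐ[μ] 1 := by
    filter_upwards [Measure.rnDeriv_le_one_of_le h] with x hx
    simpa using tsub_add_cancel_of_le hx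
  rw [withDensity_congr_ae this, withDensity_one]

/-- The pullback of a measure along a map `f` which is injective on each member of a countable
family `U`, obtained by gluing the pullbacks along the injective restrictions of `f` to the
disjointified pieces. It gives no mass to the complement of `⋃ i, U i`. -/
noncomputable def pull {X Y : Type*} [MeasurableSpace X] [MeasurableSpace Y]
    (f : X → Y) (U : ℕ → Set X) (ν : Measure Y) : Measure X :=
  Measure.sum fun i => (ν.comap (fun x : (disjointed U i : Set X) => f x)).map Subtype.val

variable {X Y : Type*} [MeasurableSpace X] [MeasurableSpace Y] {f : X → Y} {U : ℕ → Set X}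

lemma pull_eq_tsum (hf : ∀ B, MeasurableSet B → InjOn f B → MeasurableSet (f '' B))
    (hU : ∀ i, MeasurableSet (U i)) (hi : ∀ i, InjOn f (U i)) (ν : Measure Y)
    {B : Set X} (hB : MeasurableSet B) :
    pull f U ν B = ∑' i, ν (f '' (B ∩ disjointed U i)) := by
  have hD : ∀ i, MeasurableSet (disjointed U i) := fun i => MeasurableSet.disjointed hU i
  have hDi : ∀ i, InjOn f (disjointed U i) := fun i => (hi i).mono (disjointed_subset U i)
  rw [pull, Measure.sum_apply _ hB]
  congr 1
  ext i
  rw [Measure.map_apply measurable_subtype_coe hB, Measure.comap_apply]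
  · congr 1
    ext y
    simp only [mem_image, mem_preimage, Subtype.exists, mem_inter_iff]
    constructor
    · rintro ⟨x, hx, hb, rfl⟩
      exact ⟨x, ⟨hb, hx⟩, rfl⟩
    · rintro ⟨x, ⟨hb, hx⟩, rfl⟩
      exact ⟨x, hx, hb, rfl⟩
  · intro x y hxy
    exact Subtype.ext (hDi i x.2 y.2 hxy)
  · intro s hs
    have : (fun x : (disjointed U i : Set X) => f x) '' s = f '' (Subtype.val '' s) := by
      rw [image_image]
    rw [this]
    refine hf _ ((MeasurableEmbedding.subtype_coe (hD i)).measurableSet_image.2 hs) ?_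
    exact (hDi i).mono (by rintro _ ⟨x, _, rfl⟩; exact x.2)
  · exact measurable_subtype_coe hB

lemma pull_apply (hf : ∀ B, MeasurableSet B → InjOn f B → MeasurableSet (f '' B))
    (hU : ∀ i, MeasurableSet (U i)) (hi : ∀ i, InjOn f (U i)) (ν : Measure Y)
    {B : Set X} (hB : MeasurableSet B) (hBi : InjOn f B) (hBU : B ⊆ ⋃ i, U i) :
    pull f U ν B = ν (f '' B) := by
  have hD : ∀ i, MeasurableSet (disjointed U i) := fun i => MeasurableSet.disjointed hU i
  rw [pull_eq_tsum hf hU hi ν hB, ← measure_iUnion, ← image_iUnion, ← inter_iUnion,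
    iUnion_disjointed, inter_eq_left.2 hBU]
  · intro i j hij
    rw [Function.onFun, Set.disjoint_left]
    rintro _ ⟨x, hx, rfl⟩ ⟨y, hy, hxy⟩
    have := hBi hy.1 hx.1 hxy
    subst this
    exact (Set.disjoint_left.1 (disjoint_disjointed U hij)) hx.2 hy.2
  · exact fun i => hf _ (hB.inter (hD i)) (hBi.mono inter_subset_left)

lemma pull_compl (hf : ∀ B, MeasurableSet B → InjOn f B → MeasurableSet (f '' B))
    (hU : ∀ i, MeasurableSet (U i)) (hi : ∀ i, InjOn f (U i)) (ν : Measure Y) :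
    pull f U ν (⋃ i, U i)ᶜ = 0 := by
  rw [pull_eq_tsum hf hU hi ν (MeasurableSet.iUnion hU).compl, ENNReal.tsum_eq_zero]
  intro i
  have : (⋃ i, U i)ᶜ ∩ disjointed U i = ∅ := by
    rw [← Set.disjoint_iff_inter_eq_empty, Set.disjoint_compl_left_iff_subset]
    exact (disjointed_subset U i).trans (subset_iUnion U i)
  rw [this, image_empty, measure_empty]

lemma pull_preimage_null (hf : ∀ B, MeasurableSet B → InjOn f B → MeasurableSet (f '' B))
    (hfm : Measurable f)
    (hU : ∀ i, MeasurableSet (U i)) (hi : ∀ i, InjOn f (U i)) (ν : Measure Y)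
    {N : Set Y} (hN : MeasurableSet N) (h0 : ν N = 0) :
    pull f U ν (f ⁻¹' N) = 0 := by
  rw [pull_eq_tsum hf hU hi ν (hfm hN), ENNReal.tsum_eq_zero]
  intro i
  refine measure_mono_null ?_ h0
  rintro _ ⟨x, hx, rfl⟩
  exact hx.1

/-- A measure is the pullback of `ν` as soon as it has the right values on Borel subsets of the
pieces `U i` and lives on their union. -/
lemma eq_pull (hf : ∀ B, MeasurableSet B → InjOn f B → MeasurableSet (f '' B))
    (hU : ∀ i, MeasurableSet (U i)) (hi : ∀ i, InjOn f (U i)) (ν : Measure Y) (P : Measure X)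
    (hP : ∀ i, ∀ B ⊆ U i, MeasurableSet B → P B = ν (f '' B)) (hP0 : P (⋃ i, U i)ᶜ = 0) :
    P = pull f U ν := by
  have hD : ∀ i, MeasurableSet (disjointed U i) := fun i => MeasurableSet.disjointed hU i
  ext B hB
  rw [pull_eq_tsum hf hU hi ν hB]
  have h1 : P B = P (⋃ i, B ∩ disjointed U i) := by
    rw [← inter_iUnion, iUnion_disjointed, measure_inter_conull hP0]
  rw [h1, measure_iUnion]
  · congr 1
    ext i
    exact hP i _ (inter_subset_right.trans (disjointed_subset U i)) (hB.inter (hD i))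
  · intro i j hij
    exact (disjoint_disjointed U hij).mono inter_subset_right inter_subset_right
  · exact fun i => hB.inter (hD i)

end Measure

/-! ### Vertices, concatenation and truncation of finite paths -/

section Paths

variable {V E : Type u} (r s : E → V)

/-- A vertex as a path of length `0`. -/
def vtx (v : V) : FinPath r s := ⟨0, (v : PathN r s 0)⟩

/-- The path `ep` obtained by prepending an edge `e` to a finite path `p` with `s(e) = r(p)`. -/
def cons (e : E) : (p : FinPath r s) → s e = rngFin r s p.2 → FinPath r s
  | ⟨0, _⟩, _ => ⟨1, ⟨fun _ => e, fun i j hij => by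
      have hi : (i : ℕ) < 1 := i.isLt
      have hj : (j : ℕ) < 1 := j.isLt
      omega⟩⟩
  | ⟨n + 1, q⟩, h => ⟨n + 2, ⟨Fin.cons e q.1, fun i j hij => by
      obtain ⟨j, rfl⟩ := Fin.exists_succ_eq.2 (show j ≠ 0 by rintro rfl; simp at hij)
      rw [Fin.cons_succ]
      refine Fin.cases (fun hij => ?_) (fun i hij => ?_) i hij
      · rw [Fin.cons_zero]
        have : j = ⟨0, Nat.succ_pos n⟩ := Fin.ext (by simpa using hij)
        rw [this]
        exact h
      · rw [Fin.cons_succ]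
        exact q.2 i j (by simpa using hij)⟩⟩

/-- The first edge of a finite path, if there is one. -/
def headE : FinPath r s → Option E
  | ⟨0, _⟩ => none
  | ⟨_ + 1, q⟩ => some (q.1 0)

/-- The path consisting of a single edge. -/
def edgePath (e : E) : FinPath r s := cons r s e (vtx r s (s e)) rfl

lemma headE_cons (e : E) (p : FinPath r s) (h : s e = rngFin r s p.2) :
    headE r s (cons r s e p h) = some e := by
  obtain ⟨_ | n, q⟩ := p <;> rfl

lemma shiftF_cons (e : E) (p : FinPath r s) (h : s e = rngFin r s p.2) :
    shiftF r s (cons r s e p h) = p := by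
  obtain ⟨_ | n, q⟩ := p
  · change (⟨0, s e⟩ : FinPath r s) = ⟨0, q⟩
    rw [h]; rfl
  · rfl

lemma len_cons (e : E) (p : FinPath r s) (h : s e = rngFin r s p.2) :
    (cons r s e p h).1 = p.1 + 1 := by
  obtain ⟨_ | n, q⟩ := p <;> rfl

lemma rng_cons (e : E) (p : FinPath r s) (h : s e = rngFin r s p.2) :
    rngFin r s (cons r s e p h).2 = r e := by
  obtain ⟨_ | n, q⟩ := p <;> rfl

lemma src_cons (e : E) (p : FinPath r s) (h : s e = rngFin r s p.2) :
    srcFin r s (cons r s e p h).2 = srcFin r s p.2 := by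
  obtain ⟨_ | n, q⟩ := p
  · exact h
  · rfl

lemma exists_cons {p : FinPath r s} (hp : 1 ≤ p.1) :
    ∃ e q h, p = cons r s e q h := by
  obtain ⟨_ | _ | n, q⟩ := p
  · simp at hp
  · refine ⟨q.1 0, vtx r s (s (q.1 0)), rfl, ?_⟩
    change (⟨1, q⟩ : FinPath r s) = ⟨1, _⟩
    congr 1
    refine Subtype.ext (funext fun i => ?_)
    change q.1 i = q.1 0
    exact congrArg q.1 (Subsingleton.elim (α := Fin 1) _ _)
  · refine ⟨q.1 0, shiftF r s ⟨n + 2, q⟩, q.2 0 1 (by simp), ?_⟩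
    change (⟨n + 2, q⟩ : FinPath r s) = ⟨n + 2, _⟩
    congr 1
    refine Subtype.ext (funext fun i => ?_)
    refine Fin.cases rfl (fun i => rfl) i

lemma exists_vtx {p : FinPath r s} (hp : p.1 = 0) : ∃ v, p = vtx r s v := by
  obtain ⟨_ | n, q⟩ := p
  · exact ⟨q, rfl⟩
  · simp at hp

/-- Truncation `p ↦ p(k)`, extended to all of `E*` as the identity on paths shorter than `k`. -/
def trunc (k : ℕ) (p : FinPath r s) : FinPath r s := ftrunc r s p (min k p.1) (min_le_right _ _)

lemma ftrunc_eq_trunc (p : FinPath r s) (k : ℕ) (h : k ≤ p.1) :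
    ftrunc r s p k h = trunc r s k p := by
  have : ∀ k' (h' : k' ≤ p.1), k = k' → ftrunc r s p k h = ftrunc r s p k' h' := by
    rintro _ _ rfl; rfl
  exact this _ _ (min_eq_left h).symm

lemma len_trunc (k : ℕ) (p : FinPath r s) : (trunc r s k p).1 = min k p.1 := rfl

lemma trunc_vtx (k : ℕ) (v : V) : trunc r s k (vtx r s v) = vtx r s v := by
  have : ∀ k' (h' : k' ≤ 0), ftrunc r s (vtx r s v) k' h' = vtx r s v := by
    rintro k' h'
    obtain rfl : k' = 0 := by omega
    rfl
  exact this _ _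

lemma trunc_of_le {k : ℕ} {p : FinPath r s} (h : p.1 ≤ k) : trunc r s k p = p := by
  have : ∀ k' (h' : k' ≤ p.1), k' = p.1 → ftrunc r s p k' h' = p := by
    rintro _ _ rfl
    obtain ⟨_ | n, q⟩ := p <;> rfl
  exact this _ _ (min_eq_right h)

lemma trunc_zero (p : FinPath r s) : trunc r s 0 p = vtx r s (rngFin r s p.2) := by
  rw [← ftrunc_eq_trunc r s p 0 (Nat.zero_le _)]
  obtain ⟨_ | n, q⟩ := p <;> rfl

lemma rng_trunc (k : ℕ) (p : FinPath r s) :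
    rngFin r s (trunc r s k p).2 = rngFin r s p.2 := by
  have : ∀ k' (h' : k' ≤ p.1), rngFin r s (ftrunc r s p k' h').2 = rngFin r s p.2 := by
    intro k' h'
    obtain ⟨_ | n, q⟩ := p
    · obtain rfl : k' = 0 := by simpa using h'
      rfl
    · obtain _ | k' := k' <;> rfl
  exact this _ _

lemma trunc_cons (k : ℕ) (e : E) (p : FinPath r s) (h : s e = rngFin r s p.2) :
    trunc r s (k + 1) (cons r s e p h) =
      cons r s e (trunc r s k p) (h.trans (rng_trunc r s k p).symm) := by
  by_cases hk : p.1 ≤ k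
  · rw [trunc_of_le r s (by rw [len_cons]; omega)]
    congr 1
    exact (trunc_of_le r s hk).symm
  have h1 : k + 1 ≤ (cons r s e p h).1 := by rw [len_cons]; omega
  have h2 : k ≤ p.1 := by omega
  have h3 : s e = rngFin r s (ftrunc r s p k h2).2 := by
    rw [ftrunc_eq_trunc, rng_trunc]; exact h
  suffices ftrunc r s (cons r s e p h) (k + 1) h1 = cons r s e (ftrunc r s p k h2) h3 by
    rw [← ftrunc_eq_trunc r s _ _ h1, this]
    congr 1
    exact ftrunc_eq_trunc r s _ _ h2
  obtain ⟨_ | n, q⟩ := p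
  · simp at hk
  obtain _ | k := k
  · change (⟨1, _⟩ : FinPath r s) = ⟨1, _⟩
    congr 1
    refine Subtype.ext (funext fun i => ?_)
    obtain rfl : i = 0 := Subsingleton.elim (α := Fin 1) _ _
    rfl
  · change (⟨k + 2, _⟩ : FinPath r s) = ⟨k + 2, _⟩
    congr 1
    refine Subtype.ext (funext fun i => ?_)
    refine Fin.cases rfl (fun i => rfl) i

lemma trunc_trunc {i j : ℕ} (hij : i ≤ j) (p : FinPath r s) :
    trunc r s i (trunc r s j p) = trunc r s i p := by
  induction i generalizing j p with
  | zero => rw [trunc_zero, trunc_zero, rng_trunc]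
  | succ i ih =>
    obtain ⟨j, rfl⟩ : ∃ j', j = j' + 1 := ⟨j - 1, by omega⟩
    by_cases hp : p.1 = 0
    · obtain ⟨v, rfl⟩ := exists_vtx r s hp
      simp only [trunc_vtx]
    · obtain ⟨e, q, h, rfl⟩ := exists_cons r s (show 1 ≤ p.1 by omega)
      simp only [trunc_cons]
      congr 1
      exact ih (by omega) q

lemma len_shiftF (p : FinPath r s) : (shiftF r s p).1 = p.1 - 1 := by
  obtain ⟨_ | _ | n, q⟩ := p <;> rfl

end Paths

/-! ### The topology of the finite path space -/

section PathTopology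

variable {V E : Type u} (r s : E → V) [TopologicalSpace V] [TopologicalSpace E]

lemma continuous_edgeOf : ∀ {n : ℕ} (i : Fin n), Continuous (fun q : PathN r s n => edgeOf r s q i)
  | 0, i => i.elim0
  | n + 1, i => by
    exact (continuous_apply i).comp
      (continuous_subtype_val (p := fun a : Fin (n + 1) → E => Comp r s (n + 1) a))

lemma continuous_len : Continuous (fun p : FinPath r s => p.1) :=
  continuous_sigma fun _ => continuous_const

lemma continuous_vtx : Continuous (vtx r s) :=
  continuous_sigmaMk (σ := PathN r s) (i := 0)

variable {r s}

lemma continuous_rng (hr : Continuous r) : Continuous (fun p : FinPath r s => rngFin r s p.2) := by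
  refine continuous_sigma fun n => ?_
  obtain _ | n := n
  · exact continuous_id
  · exact hr.comp (continuous_edgeOf r s (n := n + 1) 0)

lemma continuous_src (hs : Continuous s) : Continuous (fun p : FinPath r s => srcFin r s p.2) := by
  refine continuous_sigma fun n => ?_
  obtain _ | n := n
  · exact continuous_id
  · exact hs.comp (continuous_edgeOf r s (n := n + 1) ⟨n, Nat.lt_succ_self n⟩)

lemma continuous_shiftF (hs : Continuous s) : Continuous (shiftF r s) := by
  refine continuous_sigma fun n => ?_
  obtain _ | _ | n := n
  · exact continuous_sigmaMk (σ := PathN r s) (i := 0)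
  · exact (continuous_vtx r s).comp (hs.comp (continuous_edgeOf r s (n := 1) 0))
  · refine (continuous_sigmaMk (σ := PathN r s) (i := n + 1)).comp ?_
    refine Continuous.subtype_mk (continuous_pi fun i => ?_) _
    exact continuous_edgeOf r s (n := n + 2) i.succ

lemma continuous_truncFin (hr : Continuous r) {m n : ℕ} (h : n ≤ m) :
    Continuous (truncFin r s h) := by
  obtain _ | m := m
  · obtain rfl : n = 0 := by omega
    exact continuous_id
  obtain _ | n := n
  · exact hr.comp (continuous_edgeOf r s (n := m + 1) 0)
  · refine Continuous.subtype_mk (continuous_pi fun i => ?_) _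
    exact continuous_edgeOf r s (n := m + 1) (Fin.castLE h i)

lemma continuous_trunc (hr : Continuous r) (k : ℕ) : Continuous (trunc r s k) :=
  continuous_sigma fun n =>
    (continuous_sigmaMk (σ := PathN r s) (i := min k n)).comp
      (continuous_truncFin hr (min_le_right k n))

lemma continuous_edgePath : Continuous (edgePath r s) := by
  have : edgePath r s = fun e => (⟨1, ⟨fun _ => e, fun i j hij => by
      have hi : (i : ℕ) < 1 := i.isLt
      have hj : (j : ℕ) < 1 := j.isLt
      omega⟩⟩ : FinPath r s) := rfl
  rw [this]
  refine (continuous_sigmaMk (σ := PathN r s) (i := 1)).comp ?_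
  exact Continuous.subtype_mk (continuous_pi fun i => continuous_id) _

variable (r s) in
/-- The paths of positive length whose first edge lies in `W`. -/
def startSet (W : Set E) : Set (FinPath r s) := {p | ∃ e ∈ W, headE r s p = some e}

lemma isOpen_startSet {W : Set E} (hW : IsOpen W) : IsOpen (startSet r s W) := by
  refine isOpen_sigma_iff.2 fun n => ?_
  obtain _ | n := n
  · convert isOpen_empty
    refine eq_empty_iff_forall_notMem.2 ?_
    rintro q ⟨e, _, he⟩
    exact Option.some_ne_none e he.symm
  · convert hW.preimage (continuous_edgeOf r s (n := n + 1) 0)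
    ext q
    constructor
    · rintro ⟨e, he, h⟩
      have h' : edgeOf r s q 0 = e := Option.some.inj h
      change edgeOf r s q 0 ∈ W
      rwa [h']
    · exact fun h => ⟨_, h, rfl⟩

lemma isOpen_regularVertex (r : E → V) : IsOpen {v : V | RegularVertex r v} := by
  refine isOpen_iff_forall_mem_open.2 ?_
  rintro v ⟨U, hU, hv, h⟩
  exact ⟨U, fun w hw => ⟨U, hU, hw, h⟩, hU, hv⟩

lemma isClosed_comp [T2Space V] (hr : Continuous r) (hs : Continuous s) (n : ℕ) :
    IsClosed {a : Fin n → E | Comp r s n a} := by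
  simp only [Comp, ofPred_forall]
  refine isClosed_iInter fun i => isClosed_iInter fun j => isClosed_iInter fun _ => ?_
  exact isClosed_eq (by fun_prop) (by fun_prop)

instance [T2Space V] [T2Space E] : T2Space (FinPath r s) := by
  have : ∀ n, T2Space (PathN r s n) := by
    rintro (_ | n)
    · exact (inferInstance : T2Space V)
    · exact (inferInstance : T2Space {a : Fin (n + 1) → E // Comp r s (n + 1) a})
  exact (inferInstance : T2Space (Σ n : ℕ, PathN r s n))

instance [SecondCountableTopology V] [SecondCountableTopology E] :
    SecondCountableTopology (FinPath r s) := by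
  have : ∀ n, SecondCountableTopology (PathN r s n) := by
    rintro (_ | n)
    · exact (inferInstance : SecondCountableTopology V)
    · exact TopologicalSpace.Subtype.secondCountableTopology
        {a : Fin (n + 1) → E | Comp r s (n + 1) a}
  exact (inferInstance : SecondCountableTopology (Σ n : ℕ, PathN r s n))

lemma locallyCompact_finPath [T2Space V] [T2Space E] [LocallyCompactSpace V]
    [LocallyCompactSpace E] (hr : Continuous r) (hs : Continuous s) :
    LocallyCompactSpace (FinPath r s) := by
  have h1 : ∀ n, LocallyCompactSpace (PathN r s n) := by
    rintro (_ | n)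
    · exact (inferInstance : LocallyCompactSpace V)
    · exact (isClosed_comp hr hs (n + 1)).isClosedEmbedding_subtypeVal.locallyCompactSpace
  have : WeaklyLocallyCompactSpace (FinPath r s) := by
    refine ⟨fun p => ?_⟩
    obtain ⟨n, q⟩ := p
    have := h1 n
    obtain ⟨K, hK, hq⟩ := exists_compact_mem_nhds q
    exact ⟨Sigma.mk n '' K, hK.image continuous_sigmaMk,
      Topology.IsOpenEmbedding.sigmaMk.image_mem_nhds.2 hq⟩
  infer_instance

/-- If the paths `p(j)` range in a compact set and the `(j+1)`-st edges range in the compact set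
`r⁻¹(A)`, then the paths `p` of length `j+1` themselves range in a compact set. -/
lemma exists_compact_extension [T2Space V] [T2Space E] (hr : Continuous r) (hs : Continuous s)
    (j : ℕ) {K : Set (FinPath r s)} (hK : IsCompact K) {A : Set V} (hA : IsCompact (r ⁻¹' A)) :
    ∃ L : Set (FinPath r s), IsCompact L ∧ ∀ p : FinPath r s, p.1 = j + 1 →
      trunc r s j p ∈ K → srcFin r s (trunc r s j p).2 ∈ A → p ∈ L := by
  have hKj : IsCompact (Sigma.mk j ⁻¹' K : Set (PathN r s j)) :=
    (Topology.IsClosedEmbedding.sigmaMk (σ := PathN r s) (i := j)).isCompact_preimage hK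
  let C : Fin (j + 1) → Set E := fun i =>
    if h : (i : ℕ) < j then (fun q : PathN r s j => edgeOf r s q ⟨i, h⟩) '' (Sigma.mk j ⁻¹' K)
    else r ⁻¹' A
  have hC : ∀ i, IsCompact (C i) := by
    intro i
    by_cases h : (i : ℕ) < j
    · simp only [C, dif_pos h]
      exact hKj.image (continuous_edgeOf r s _)
    · simpa only [C, dif_neg h] using hA
  have hL : IsCompact {q : PathN r s (j + 1) | ∀ i, q.1 i ∈ C i} := by
    have := (isClosed_comp hr hs (j + 1)).isClosedEmbedding_subtypeVal.isCompact_preimage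
      (isCompact_univ_pi hC)
    have e : {q : PathN r s (j + 1) | ∀ i, q.1 i ∈ C i} =
        (fun q : PathN r s (j + 1) => q.1) ⁻¹' (univ.pi C) := by
      ext q
      exact ⟨fun h i _ => h i, fun h i => h i trivial⟩
    rw [e]
    exact this
  refine ⟨Sigma.mk (j + 1) '' {q : PathN r s (j + 1) | ∀ i, q.1 i ∈ C i},
    hL.image continuous_sigmaMk, ?_⟩
  intro p hn hpK hpA
  rw [← ftrunc_eq_trunc r s p j (by omega)] at hpK hpA
  obtain ⟨n, q⟩ := p
  obtain rfl : n = j + 1 := hn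
  refine ⟨q, fun i => ?_, rfl⟩
  by_cases h : (i : ℕ) < j
  · simp only [C, dif_pos h]
    refine ⟨truncFin r s (Nat.le_succ j) q, hpK, ?_⟩
    obtain _ | j := j
    · omega
    · rfl
  · simp only [C, dif_neg h, mem_preimage]
    convert hpA
    obtain rfl : i = Fin.last j := Fin.ext (by have := i.isLt; simp; omega)
    obtain _ | j := j
    · rfl
    · exact (q.2 ⟨j, by omega⟩ (Fin.last (j + 1)) rfl).symm

noncomputable instance : MeasurableSpace (FinPath r s) := borel _

instance : BorelSpace (FinPath r s) := ⟨rfl⟩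

end PathTopology

/-! ### The topology of the boundary path spaces -/

section BoundaryTopology

open Filter
open scoped Topology

variable {V E : Type u} {r s : E → V} [TopologicalSpace V] [TopologicalSpace E] {n : ℕ}

lemma mem_ZNSet {S : Set (FinPath r s)} {x : BPathN r s n} :
    x ∈ ZNSet r s n S ↔ ∃ k ≤ x.val.1, trunc r s k x.val ∈ S := by
  constructor
  · rintro ⟨k, h, hk⟩
    exact ⟨k, h, ftrunc_eq_trunc r s _ _ h ▸ hk⟩
  · rintro ⟨k, h, hk⟩
    exact ⟨k, h, (ftrunc_eq_trunc r s _ _ h).symm ▸ hk⟩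

lemma mem_ZNSet_self {S : Set (FinPath r s)} {x : BPathN r s n} (h : x.val ∈ S) :
    x ∈ ZNSet r s n S :=
  mem_ZNSet.2 ⟨x.val.1, le_rfl, by rwa [trunc_of_le r s le_rfl]⟩

lemma isOpen_ZNSet {U : Set (FinPath r s)} (hU : IsOpen U) : IsOpen (ZNSet r s n U) := by
  refine TopologicalSpace.isOpen_generateFrom_of_mem ⟨U, ∅, hU, isCompact_empty, ?_⟩
  have : ZNSet r s n ∅ = ∅ := eq_empty_iff_forall_notMem.2 fun x ⟨_, _, h⟩ => h
  rw [this, sdiff_empty]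

lemma isClosed_ZNSet {K : Set (FinPath r s)} (hK : IsCompact K) : IsClosed (ZNSet r s n K) := by
  refine ⟨TopologicalSpace.isOpen_generateFrom_of_mem ⟨univ, K, isOpen_univ, hK, ?_⟩⟩
  have : ZNSet r s n univ = univ := eq_univ_of_forall fun x => mem_ZNSet_self (mem_univ _)
  rw [this, compl_eq_univ_sdiff]

variable (r s) in
/-- The finite set of all truncations of a path. -/
def truncs (p : FinPath r s) : Set (FinPath r s) := (fun k => trunc r s k p) '' Iic p.1

omit [TopologicalSpace V] [TopologicalSpace E] in
lemma finite_truncs (p : FinPath r s) : (truncs r s p).Finite := (finite_Iic _).image _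

lemma mem_ZNSet_iff_truncs {S : Set (FinPath r s)} {x : BPathN r s n} :
    x ∈ ZNSet r s n S ↔ (truncs r s x.val ∩ S).Nonempty := by
  rw [mem_ZNSet]
  constructor
  · rintro ⟨k, h, hk⟩
    exact ⟨_, ⟨k, h, rfl⟩, hk⟩
  · rintro ⟨_, ⟨k, h, rfl⟩, hk⟩
    exact ⟨k, h, hk⟩

omit [TopologicalSpace V] [TopologicalSpace E] in
lemma self_mem_truncs (p : FinPath r s) : p ∈ truncs r s p :=
  ⟨p.1, mem_Iic.2 le_rfl, trunc_of_le r s le_rfl⟩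

omit [TopologicalSpace V] [TopologicalSpace E] in
lemma eq_of_mem_truncs {p q : FinPath r s} (h1 : p ∈ truncs r s q) (h2 : q ∈ truncs r s p) :
    p = q := by
  obtain ⟨k, hk, rfl⟩ := h1
  obtain ⟨l, hl, h⟩ := h2
  have h3 := congrArg Sigma.fst h
  simp only [len_trunc, mem_Iic] at h3 hl hk
  exact trunc_of_le r s (by omega)

variable [T2Space V] [T2Space E] [LocallyCompactSpace V] [LocallyCompactSpace E]

lemma t2_boundary (hr : Continuous r) (hs : Continuous s) : T2Space (BPathN r s n) := by
  have := locallyCompact_finPath hr hs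
  -- A truncation of `y` which is not a truncation of `x` has a compact neighbourhood `K`
  -- missing all truncations of `x`.
  have key : ∀ x y : BPathN r s n, y.val ∉ truncs r s x.val →
      ∃ u v, IsOpen u ∧ IsOpen v ∧ x ∈ u ∧ y ∈ v ∧ Disjoint u v := by
    intro x y h
    obtain ⟨K, hK, hyK, hKx⟩ :=
      exists_compact_subset (finite_truncs x.val).isClosed.isOpen_compl h
    refine ⟨(ZNSet r s n K)ᶜ, ZNSet r s n (interior K), (isClosed_ZNSet hK).isOpen_compl,
      isOpen_ZNSet isOpen_interior, ?_, mem_ZNSet_self hyK, ?_⟩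
    · rw [mem_compl_iff, mem_ZNSet_iff_truncs]
      rintro ⟨p, hp, hpK⟩
      exact hKx hpK hp
    · rw [Set.disjoint_left]
      rintro z hz ⟨k, hk, hzk⟩
      exact hz ⟨k, hk, interior_subset hzk⟩
  refine ⟨fun x y hxy => ?_⟩
  by_cases h : y.val ∈ truncs r s x.val
  · have h' : x.val ∉ truncs r s y.val := fun h' => hxy (Subtype.ext (eq_of_mem_truncs h' h))
    obtain ⟨u, v, hu, hv, hxu, hyv, hd⟩ := key y x h'
    exact ⟨v, u, hv, hu, hyv, hxu, hd.symm⟩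
  · exact key x y h

lemma secondCountable_boundary [SecondCountableTopology V] [SecondCountableTopology E]
    (hr : Continuous r) (hs : Continuous s) : SecondCountableTopology (BPathN r s n) := by
  have := locallyCompact_finPath hr hs
  obtain ⟨b, hbc, -, hb⟩ := TopologicalSpace.exists_countable_basis (FinPath r s)
  let g : Set (Set (BPathN r s n)) := (fun U => ZNSet r s n U) '' b ∪
    (fun t => (ZNSet r s n (closure (⋃₀ t)))ᶜ) ''
      {t | (t.Finite ∧ t ⊆ b) ∧ IsCompact (closure (⋃₀ t))}
  refine ⟨g, ?_, le_antisymm ?_ ?_⟩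
  · exact (hbc.image _).union (((countable_ofPred_finite_subset hbc).mono fun t ht => ht.1).image _)
  · refine le_generateFrom ?_
    rintro _ (⟨U, hU, rfl⟩ | ⟨t, ⟨_, ht⟩, rfl⟩)
    · exact isOpen_ZNSet (hb.isOpen hU)
    · exact (isClosed_ZNSet ht).isOpen_compl
  · refine le_generateFrom ?_
    rintro _ ⟨U, K, hU, hK, rfl⟩
    have h1 : ZNSet r s n U = ⋃₀ ((fun U => ZNSet r s n U) '' {W | W ∈ b ∧ W ⊆ U}) := by
      ext x
      rw [mem_ZNSet]
      constructor
      · rintro ⟨k, hk, hx⟩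
        obtain ⟨W, hW, hxW, hWU⟩ := hb.exists_subset_of_mem_open hx hU
        exact ⟨_, ⟨W, ⟨hW, hWU⟩, rfl⟩, mem_ZNSet.2 ⟨k, hk, hxW⟩⟩
      · rintro ⟨_, ⟨W, ⟨hW, hWU⟩, rfl⟩, hx⟩
        obtain ⟨k, hk, hx⟩ := mem_ZNSet.1 hx
        exact ⟨k, hk, hWU hx⟩
    have h2 : (ZNSet r s n K)ᶜ = ⋃₀ ((fun t => (ZNSet r s n (closure (⋃₀ t)))ᶜ) ''
        {t | ((t.Finite ∧ t ⊆ b) ∧ IsCompact (closure (⋃₀ t))) ∧ K ⊆ ⋃₀ t}) := by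
      ext x
      constructor
      · intro hx
        have hKx : K ⊆ (truncs r s x.val)ᶜ := fun p hp hpx =>
          hx (mem_ZNSet_iff_truncs.2 ⟨p, hpx, hp⟩)
        obtain ⟨L, hL, hKL, hLx⟩ :=
          exists_compact_between hK (finite_truncs x.val).isClosed.isOpen_compl hKx
        obtain ⟨t, htL, htf, hKt⟩ := hK.elim_finite_subcover_image
          (b := {W | W ∈ b ∧ W ⊆ interior L}) (c := id) (fun W hW => hb.isOpen hW.1) (by
            intro p hp
            obtain ⟨W, hW, hpW, hWL⟩ := hb.exists_subset_of_mem_open (hKL hp) isOpen_interior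
            exact mem_biUnion (show W ∈ {W | W ∈ b ∧ W ⊆ interior L} from ⟨hW, hWL⟩) hpW)
        replace hKt : K ⊆ ⋃₀ t := by rwa [sUnion_eq_biUnion]
        have hcl : closure (⋃₀ t) ⊆ L :=
          closure_minimal (sUnion_subset fun W hW => (htL hW).2.trans interior_subset) hL.isClosed
        refine ⟨_, ⟨t, ⟨⟨⟨htf, fun W hW => (htL hW).1⟩, hL.of_isClosed_subset isClosed_closure hcl⟩,
          hKt⟩, rfl⟩, ?_⟩
        rw [mem_compl_iff, mem_ZNSet_iff_truncs]
        rintro ⟨p, hp, hpc⟩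
        exact hLx (hcl hpc) hp
      · rintro ⟨_, ⟨t, ⟨_, hKt⟩, rfl⟩, hx⟩ ⟨k, hk, hxk⟩
        exact hx ⟨k, hk, subset_closure (hKt hxk)⟩
    rw [Set.sdiff_eq, h1, h2]
    refine TopologicalSpace.GenerateOpen.inter _ _ (TopologicalSpace.GenerateOpen.sUnion _ ?_)
      (TopologicalSpace.GenerateOpen.sUnion _ ?_)
    · rintro _ ⟨W, hW, rfl⟩
      exact TopologicalSpace.GenerateOpen.basic _ (Or.inl ⟨W, hW.1, rfl⟩)
    · rintro _ ⟨t, ht, rfl⟩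
      exact TopologicalSpace.GenerateOpen.basic _ (Or.inr ⟨t, ht.1, rfl⟩)

omit [LocallyCompactSpace V] [LocallyCompactSpace E] in
/-- Cylinders over compact sets are compact. Along an ultrafilter on such a cylinder, let `j` be
the largest length at which the truncations stay in a compact set, and let `p` be their limit.
Then `p` has length `j`, and when `j < n` its source is singular: at a regular source either the
paths of length exactly `j` would have regular sources as well, or the truncations at length
`j + 1` would stay in a compact set. -/
lemma isCompact_ZNSet (hr : Continuous r) (hs : Continuous s) {K : Set (FinPath r s)}
    (hK : IsCompact K) : IsCompact (ZNSet r s n K) := by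
  classical
  rw [isCompact_iff_ultrafilter_le_nhds]
  intro F hF
  rw [le_principal_iff] at hF
  have pick : ∀ S, ZNSet r s n S ∈ F →
      ∃ i ≤ n, {x : BPathN r s n | i ≤ x.val.1 ∧ trunc r s i x.val ∈ S} ∈ F := by
    intro S hS
    have h1 : ZNSet r s n S =
        ⋃ i ∈ Iic n, {x : BPathN r s n | i ≤ x.val.1 ∧ trunc r s i x.val ∈ S} := by
      ext x
      simp only [mem_ZNSet, mem_iUnion, mem_ofPred_eq, mem_Iic, exists_prop]
      exact ⟨fun ⟨k, hk, h⟩ => ⟨k, hk.trans x.property.1, hk, h⟩,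
        fun ⟨k, _, hk, h⟩ => ⟨k, hk, h⟩⟩
    rw [h1, Ultrafilter.finite_biUnion_mem_iff (finite_Iic n)] at hS
    exact hS
  let Q : ℕ → Prop := fun j => ∃ L : Set (FinPath r s), IsCompact L ∧
    {x : BPathN r s n | j ≤ x.val.1 ∧ trunc r s j x.val ∈ L} ∈ F
  obtain ⟨i₀, hi₀, hQ₀⟩ := pick K hF
  obtain ⟨j, hjn, ⟨L, hL, hLF⟩, hmax⟩ : ∃ j ≤ n, Q j ∧ ∀ i ≤ n, Q i → i ≤ j :=
    ⟨Nat.findGreatest Q n, Nat.findGreatest_le n, Nat.findGreatest_spec (P := Q) hi₀ ⟨K, hK, hQ₀⟩,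
      fun i hi hQ => Nat.le_findGreatest hi hQ⟩
  obtain ⟨p, hpL, hp⟩ := hL.ultrafilter_le_nhds (F.map fun x => trunc r s j x.val) (by
    rw [le_principal_iff]
    exact Ultrafilter.mem_map.2 (mem_of_superset hLF fun x hx => hx.2))
  have ht : Tendsto (fun x : BPathN r s n => trunc r s j x.val) F (𝓝 p) := hp
  have hlen : ∀ᶠ x : BPathN r s n in F, j ≤ x.val.1 := mem_of_superset hLF fun x hx => hx.1
  have hpj : p.1 = j := by
    refine tendsto_nhds_unique (((continuous_len r s).tendsto p).comp ht)
      (tendsto_const_nhds.congr' ?_)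
    filter_upwards [hlen] with x hx
    exact (min_eq_left hx).symm
  have hsing : p.1 < n → ¬ RegularVertex r (srcFin r s p.2) := by
    intro hlt hreg
    have hsrc : Tendsto (fun x : BPathN r s n => srcFin r s (trunc r s j x.val).2) F
        (𝓝 (srcFin r s p.2)) := ((continuous_src hs).tendsto p).comp ht
    by_cases hj : {x : BPathN r s n | x.val.1 = j} ∈ F
    · have h1 := hsrc.eventually ((isOpen_regularVertex r).mem_nhds hreg)
      obtain ⟨x, hx1, hx2⟩ := (h1.and (Filter.eventually_of_mem hj fun x hx => hx)).exists
      have hx2 : x.val.1 = j := hx2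
      have hx1 : RegularVertex r (srcFin r s (trunc r s j x.val).2) := hx1
      rw [trunc_of_le r s hx2.le] at hx1
      exact x.property.2 (by omega) hx1
    · obtain ⟨U, hU, hpU, _, hUc, _⟩ := hreg
      obtain ⟨L', hL', hL'2⟩ := exists_compact_extension hr hs j hL hUc
      have : Q (j + 1) := by
        refine ⟨L', hL', ?_⟩
        filter_upwards [hLF, Ultrafilter.compl_mem_iff_notMem.2 hj,
          hsrc.eventually (hU.mem_nhds hpU)] with x hx1 hx2 hx3
        have hx2 : ¬ x.val.1 = j := hx2
        have hx4 : j + 1 ≤ x.val.1 := by have := hx1.1; omega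
        refine ⟨hx4, hL'2 _ (min_eq_left hx4) ?_ ?_⟩
        · rw [trunc_trunc r s (Nat.le_succ j)]
          exact hx1.2
        · rw [trunc_trunc r s (Nat.le_succ j)]
          exact subset_closure hx3
      have := hmax (j + 1) (by omega) this
      omega
  let P : BPathN r s n := ⟨p, by omega, hsing⟩
  have hlim : (F : Filter (BPathN r s n)) ≤ 𝓝 P := by
    have e : 𝓝 P = _ := TopologicalSpace.nhds_generateFrom
    rw [e]
    refine le_iInf₂ ?_
    rintro _ ⟨hx, U, K', hU, hK', rfl⟩
    rw [le_principal_iff]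
    have htr : ∀ i ≤ j, Tendsto (fun x : BPathN r s n => trunc r s i x.val) F
        (𝓝 (trunc r s i p)) := by
      intro i hi
      have := ((continuous_trunc hr i).tendsto p).comp ht
      simpa only [Function.comp_def, trunc_trunc r s hi] using this
    refine inter_mem ?_ ?_
    · obtain ⟨i, hi, hiU⟩ := mem_ZNSet.1 hx.1
      have hij : i ≤ j := hpj ▸ hi
      filter_upwards [hlen, (htr i hij).eventually (hU.mem_nhds hiU)] with x hx1 hx2
      exact mem_ZNSet.2 ⟨i, hij.trans hx1, hx2⟩
    · refine Ultrafilter.compl_mem_iff_notMem.2 fun hKF => hx.2 ?_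
      obtain ⟨i, hi, hiF⟩ := pick K' hKF
      have hij : i ≤ j := hmax i hi ⟨K', hK', hiF⟩
      refine mem_ZNSet.2 ⟨i, hij.trans hpj.ge, ?_⟩
      exact hK'.isClosed.mem_of_tendsto (htr i hij) (mem_of_superset hiF fun x hx => hx.2)
  exact ⟨P, (isClosed_ZNSet hK).mem_of_tendsto (tendsto_id.mono_left hlim) hF, hlim⟩

lemma locallyCompact_boundary (hr : Continuous r) (hs : Continuous s) :
    LocallyCompactSpace (BPathN r s n) := by
  have := locallyCompact_finPath hr hs
  have := t2_boundary (n := n) hr hs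
  have : WeaklyLocallyCompactSpace (BPathN r s n) := by
    refine ⟨fun x => ?_⟩
    obtain ⟨K, hK, hx⟩ := exists_compact_mem_nhds x.val
    refine ⟨_, isCompact_ZNSet hr hs hK, ?_⟩
    refine Filter.mem_of_superset ((isOpen_ZNSet (n := n) isOpen_interior).mem_nhds
      (mem_ZNSet_self (mem_interior_iff_mem_nhds.2 hx))) ?_
    rintro y ⟨k, hk, hy⟩
    exact ⟨k, hk, interior_subset hy⟩
  infer_instance

end BoundaryTopology

/-! ### The measures on the finite path space -/

section PathMeasures

open Filter
open scoped Topology ENNReal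

variable {V E : Type u} {r s : E → V} {W : ℕ → Set E}

lemma mem_startSet_cons {W : Set E} {e : E} {q : FinPath r s} {h : s e = rngFin r s q.2} :
    cons r s e q h ∈ startSet r s W ↔ e ∈ W := by
  simp only [startSet, mem_ofPred_eq, headE_cons, Option.some.injEq]
  exact ⟨fun ⟨_, h, h'⟩ => h' ▸ h, fun h => ⟨e, h, rfl⟩⟩

lemma vtx_notMem_startSet {W : Set E} {v : V} : vtx r s v ∉ startSet r s W := by
  rintro ⟨e, _, he⟩
  exact Option.some_ne_none e he.symm

lemma one_le_len_of_mem_startSet {W : Set E} {p : FinPath r s} (h : p ∈ startSet r s W) :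
    1 ≤ p.1 := by
  by_contra hp
  obtain ⟨v, rfl⟩ := exists_vtx r s (show p.1 = 0 by omega)
  exact vtx_notMem_startSet h

lemma iUnion_startSet (hWu : ⋃ i, W i = univ) :
    ⋃ i, startSet r s (W i) = {p | 1 ≤ p.1} := by
  ext p
  rw [mem_iUnion, mem_ofPred_eq]
  constructor
  · rintro ⟨i, hi⟩
    exact one_le_len_of_mem_startSet hi
  · intro hp
    obtain ⟨e, q, h, rfl⟩ := exists_cons r s hp
    obtain ⟨i, hi⟩ := mem_iUnion.1 (hWu ▸ mem_univ e)
    exact ⟨i, mem_startSet_cons.2 hi⟩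

lemma injOn_shiftF {W : Set E} (hW : InjOn s W) : InjOn (shiftF r s) (startSet r s W) := by
  intro p hp p' hp' heq
  obtain ⟨e, q, h, rfl⟩ := exists_cons r s (one_le_len_of_mem_startSet hp)
  obtain ⟨e', q', h', rfl⟩ := exists_cons r s (one_le_len_of_mem_startSet hp')
  rw [shiftF_cons, shiftF_cons] at heq
  subst heq
  obtain rfl := hW (mem_startSet_cons.1 hp) (mem_startSet_cons.1 hp') (h.trans h'.symm)
  rfl

lemma trunc_mem_startSet {W : Set E} {k : ℕ} {p : FinPath r s} :
    trunc r s (k + 1) p ∈ startSet r s W ↔ p ∈ startSet r s W := by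
  by_cases hp : p.1 = 0
  · obtain ⟨v, rfl⟩ := exists_vtx r s hp
    rw [trunc_vtx]
  · obtain ⟨e, q, h, rfl⟩ := exists_cons r s (show 1 ≤ p.1 by omega)
    rw [trunc_cons, mem_startSet_cons, mem_startSet_cons]

/-- The square formed by the truncations `p ↦ p(k+1)`, `q ↦ q(k)` and the shifts is cartesian. -/
lemma shiftF_image_trunc_preimage {k : ℕ} {B : Set (FinPath r s)} (hB : ∀ p ∈ B, 1 ≤ p.1) :
    shiftF r s '' (trunc r s (k + 1) ⁻¹' B) = trunc r s k ⁻¹' (shiftF r s '' B) := by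
  ext y
  constructor
  · rintro ⟨p, hp, rfl⟩
    have h1 := hB _ hp
    rw [len_trunc] at h1
    obtain ⟨e, q, h, rfl⟩ := exists_cons r s (show 1 ≤ p.1 by omega)
    rw [mem_preimage, trunc_cons] at hp
    exact ⟨_, hp, by rw [shiftF_cons, shiftF_cons]⟩
  · rintro ⟨p, hp, hpy⟩
    obtain ⟨e, q, h, rfl⟩ := exists_cons r s (hB p hp)
    rw [shiftF_cons] at hpy
    subst hpy
    refine ⟨cons r s e y (by rw [h, rng_trunc]), ?_, shiftF_cons r s _ _ _⟩
    rw [mem_preimage, trunc_cons]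
    exact hp

lemma exists_injective_cover [TopologicalSpace V] [TopologicalSpace E]
    [SecondCountableTopology E] (hs : IsLocalHomeomorph s) :
    ∃ W : ℕ → Set E, (∀ i, IsOpen (W i)) ∧ (∀ i, InjOn s (W i)) ∧ ⋃ i, W i = univ := by
  have h1 : ∀ e : E, ∃ O : Set E, IsOpen O ∧ InjOn s O ∧ e ∈ O := by
    intro e
    obtain ⟨g, hg, rfl⟩ := hs e
    exact ⟨g.source, g.open_source, g.injOn, hg⟩
  choose O hO hOi he using h1
  obtain ⟨t, htc, ht⟩ := TopologicalSpace.countable_cover_nhds fun e => (hO e).mem_nhds (he e)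
  obtain ⟨W, hW⟩ := ((htc.image O).insert ∅).exists_eq_range ⟨∅, mem_insert _ _⟩
  have hmem : ∀ i, W i = ∅ ∨ ∃ e ∈ t, O e = W i := by
    intro i
    have : W i ∈ insert ∅ (O '' t) := hW ▸ mem_range_self i
    exact this
  refine ⟨W, fun i => ?_, fun i => ?_, ?_⟩
  · rcases hmem i with h | ⟨e, _, h⟩
    · rw [h]; exact isOpen_empty
    · rw [← h]; exact hO e
  · rcases hmem i with h | ⟨e, _, h⟩
    · rw [h]; exact injOn_empty s
    · rw [← h]; exact hOi e
  · refine eq_univ_of_forall fun x => ?_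
    obtain ⟨e, het, hx⟩ := mem_iUnion₂.1 (ht ▸ mem_univ x)
    have : O e ∈ range W := hW ▸ mem_insert_of_mem _ (mem_image_of_mem O het)
    obtain ⟨i, hi⟩ := this
    exact mem_iUnion.2 ⟨i, hi ▸ hx⟩

variable [TopologicalSpace V] [TopologicalSpace E]

variable (r s) in
/-- The pullback of a measure on `E*` along the shift, where `W` is a countable open cover of `E`
by sets on which `s` is injective. It lives on the paths of positive length. -/
noncomputable def shiftPull (W : ℕ → Set E) (ν : Measure (FinPath r s)) :
    Measure (FinPath r s) :=
  pull (shiftF r s) (fun i => startSet r s (W i)) ν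

variable [MeasurableSpace V]

variable (r s) in
/-- The measures `μₙ` of the recursion, as measures on `E*` which turn out to be carried by
`∂Eₙ ⊆ E*`. The parameter `c` stands for `e^{-β}`, and `m` for `μ - c Tμ`. -/
noncomputable def pathMeas (W : ℕ → Set E) (c : ℝ≥0∞) (μ m : Measure V) :
    ℕ → Measure (FinPath r s)
  | 0 => μ.map (vtx r s)
  | n + 1 => c • shiftPull r s W (pathMeas W c μ m n) + m.map (vtx r s)

variable [T2Space V] [T2Space E] [LocallyCompactSpace V] [LocallyCompactSpace E]
    [SecondCountableTopology V] [SecondCountableTopology E]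

omit [MeasurableSpace V] in
lemma measurableSet_shiftF_image (hr : Continuous r) (hs : Continuous s)
    (B : Set (FinPath r s)) (hB : MeasurableSet B) (hi : InjOn (shiftF r s) B) :
    MeasurableSet (shiftF r s '' B) := by
  have := locallyCompact_finPath hr hs
  have : TopologicalSpace.MetrizableSpace (FinPath r s) :=
    TopologicalSpace.metrizableSpace_of_t3_secondCountable _
  exact measurableSet_image (continuous_shiftF hs) hB hi

variable (hr : Continuous r) (hs : Continuous s) (hWo : ∀ i, IsOpen (W i))
  (hWi : ∀ i, InjOn s (W i)) (hWu : ⋃ i, W i = univ)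

include hr hs hWo hWi hWu

omit [MeasurableSpace V] in
lemma shiftPull_apply (ν : Measure (FinPath r s)) {B : Set (FinPath r s)}
    (hB : MeasurableSet B) (hi : InjOn (shiftF r s) B) (hB1 : ∀ p ∈ B, 1 ≤ p.1) :
    shiftPull r s W ν B = ν (shiftF r s '' B) :=
  pull_apply (measurableSet_shiftF_image hr hs) (fun i => (isOpen_startSet (hWo i)).measurableSet)
    (fun i => injOn_shiftF (hWi i)) ν hB hi (by rw [iUnion_startSet hWu]; exact hB1)

omit [MeasurableSpace V] in
lemma shiftPull_null (ν : Measure (FinPath r s)) {B : Set (FinPath r s)}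
    (hB : ∀ p ∈ B, p.1 = 0) : shiftPull r s W ν B = 0 := by
  refine measure_mono_null ?_ (pull_compl (measurableSet_shiftF_image hr hs)
    (fun i => (isOpen_startSet (hWo i)).measurableSet) (fun i => injOn_shiftF (hWi i)) ν)
  intro p hp
  rw [iUnion_startSet hWu, mem_compl_iff, mem_ofPred_eq, hB p hp]
  omega

omit [MeasurableSpace V] in
lemma map_trunc_shiftPull (k : ℕ) (ν : Measure (FinPath r s)) :
    (shiftPull r s W ν).map (trunc r s (k + 1)) = shiftPull r s W (ν.map (trunc r s k)) := by
  have hm := fun k => (continuous_trunc (s := s) hr k).measurable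
  refine eq_pull (measurableSet_shiftF_image hr hs)
    (fun i => (isOpen_startSet (hWo i)).measurableSet) (fun i => injOn_shiftF (hWi i)) _ _ ?_ ?_
  · intro i B hBU hB
    have hB1 : ∀ p ∈ B, 1 ≤ p.1 := fun p hp => one_le_len_of_mem_startSet (hBU hp)
    have hsub : trunc r s (k + 1) ⁻¹' B ⊆ startSet r s (W i) := fun p hp =>
      trunc_mem_startSet.1 (hBU hp)
    rw [Measure.map_apply (hm _) hB, Measure.map_apply (hm _)
      (measurableSet_shiftF_image hr hs B hB ((injOn_shiftF (hWi i)).mono hBU)),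
      ← shiftF_image_trunc_preimage hB1]
    exact shiftPull_apply hr hs hWo hWi hWu ν (hm _ hB) ((injOn_shiftF (hWi i)).mono hsub)
      fun p hp => one_le_len_of_mem_startSet (hsub hp)
  · rw [Measure.map_apply (hm _)
      (MeasurableSet.iUnion fun i => (isOpen_startSet (hWo i)).measurableSet).compl]
    refine shiftPull_null hr hs hWo hWi hWu ν fun p hp => ?_
    rw [iUnion_startSet hWu, mem_preimage, mem_compl_iff, mem_ofPred_eq, len_trunc] at hp
    omega

/-- Under the identification of `E¹` with `E`, the pullback of `μ` along the shift is `s*μ`. -/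
lemma shiftPull_map_vtx [BorelSpace V] [MeasurableSpace E] [BorelSpace E] (μ : Measure V)
    (sμ : Measure E) (hpull : IsPullback s sμ μ) :
    shiftPull r s W (μ.map (vtx r s)) = sμ.map (edgePath r s) := by
  have hv := (continuous_vtx r s).measurable
  have he := (continuous_edgePath (r := r) (s := s)).measurable
  symm
  refine eq_pull (measurableSet_shiftF_image hr hs)
    (fun i => (isOpen_startSet (hWo i)).measurableSet) (fun i => injOn_shiftF (hWi i)) _ _ ?_ ?_
  · intro i B hBU hB
    have hsub : edgePath r s ⁻¹' B ⊆ W i := fun e he => mem_startSet_cons.1 (hBU he)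
    rw [Measure.map_apply he hB, Measure.map_apply hv
      (measurableSet_shiftF_image hr hs B hB ((injOn_shiftF (hWi i)).mono hBU)),
      hpull (W i) (hWo i) (hWi i) _ hsub (he hB)]
    congr 1
    ext v
    constructor
    · rintro ⟨e, heB, rfl⟩
      exact ⟨_, heB, shiftF_cons r s _ _ _⟩
    · rintro ⟨p, hp, hpv⟩
      obtain ⟨e, q, h, rfl⟩ := exists_cons r s (one_le_len_of_mem_startSet (hBU hp))
      rw [shiftF_cons] at hpv
      subst hpv
      obtain rfl : s e = v := h
      exact ⟨e, hp, rfl⟩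
  · rw [Measure.map_apply he
      (MeasurableSet.iUnion fun i => (isOpen_startSet (hWo i)).measurableSet).compl]
    convert measure_empty (μ := sμ)
    refine eq_empty_iff_forall_notMem.2 fun e he => ?_
    rw [iUnion_startSet hWu, mem_preimage, mem_compl_iff, mem_ofPred_eq] at he
    exact he (show 1 ≤ (edgePath r s e).1 from le_refl 1)

variable {c : ℝ≥0∞} {μ m : Measure V}

/-- The consistency `(ρₙ)_* μₙ₊₁ = μₙ`. The case `n = 0` is the identity `c Tμ + m = μ`; the
inductive step holds because pullback along the shift commutes with truncation. -/
lemma map_trunc_pathMeas [BorelSpace V] [MeasurableSpace E] [BorelSpace E]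
    {sμ : Measure E} (hpull : IsPullback s sμ μ) (hm : m + c • sμ.map r = μ) (n : ℕ) :
    (pathMeas r s W c μ m (n + 1)).map (trunc r s n) = pathMeas r s W c μ m n := by
  have hv := (continuous_vtx r s).measurable
  have ht := fun k => (continuous_trunc (s := s) hr k).measurable
  have htv : ∀ k, (m.map (vtx r s)).map (trunc r s k) = m.map (vtx r s) := by
    intro k
    rw [Measure.map_map (ht k) hv]
    congr 1
    exact funext fun v => trunc_vtx r s k v
  induction n with
  | zero =>
    have e0 : pathMeas r s W c μ m 0 = μ.map (vtx r s) := rfl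
    have e1 : pathMeas r s W c μ m (0 + 1) =
      c • shiftPull r s W (pathMeas r s W c μ m 0) + m.map (vtx r s) := rfl
    rw [e1, e0, Measure.map_add _ _ (ht 0), Measure.map_smul, htv,
      shiftPull_map_vtx hr hs hWo hWi hWu μ sμ hpull,
      Measure.map_map (ht 0) continuous_edgePath.measurable]
    have : trunc r s 0 ∘ edgePath r s = vtx r s ∘ r := by
      funext e
      rw [Function.comp_apply, trunc_zero]
      exact congrArg _ (rng_cons r s e _ _)
    rw [this, ← Measure.map_map hv hr.measurable, ← Measure.map_smul, ← Measure.map_add _ _ hv,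
      add_comm, hm]
  | succ n ih =>
    rw [pathMeas, Measure.map_add _ _ (ht _), Measure.map_smul, htv,
      map_trunc_shiftPull hr hs hWo hWi hWu, ih]
    rfl

lemma pathMeas_apply (n : ℕ) {B : Set (FinPath r s)} [BorelSpace V]
    (hB : MeasurableSet B) (hi : InjOn (shiftF r s) B) (hB1 : ∀ p ∈ B, 1 ≤ p.1) :
    pathMeas r s W c μ m (n + 1) B = c * pathMeas r s W c μ m n (shiftF r s '' B) := by
  have hv := (continuous_vtx r s).measurable
  have h0 : vtx r s ⁻¹' B = ∅ := by
    refine eq_empty_iff_forall_notMem.2 fun v hv => ?_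
    exact absurd (hB1 _ hv) (by simp [vtx])
  rw [pathMeas, Measure.add_apply, Measure.smul_apply, Measure.map_apply hv hB, h0, measure_empty,
    add_zero, shiftPull_apply hr hs hWo hWi hWu _ hB hi hB1, smul_eq_mul]

lemma pathMeas_vtx (n : ℕ) {B : Set (FinPath r s)} [BorelSpace V]
    (hB : MeasurableSet B) (hB0 : ∀ p ∈ B, p.1 = 0) :
    pathMeas r s W c μ m (n + 1) B = m (vtx r s ⁻¹' B) := by
  rw [pathMeas, Measure.add_apply, Measure.smul_apply,
    Measure.map_apply (continuous_vtx r s).measurable hB,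
    shiftPull_null hr hs hWo hWi hWu _ hB0, smul_zero, zero_add]

omit hr hs hWo hWi hWu
variable (r s) in
/-- The carrier of `∂Eₙ`, as a subset of `E*`. -/
def carrier (n : ℕ) : Set (FinPath r s) :=
  {p | p.1 ≤ n ∧ (p.1 < n → ¬ RegularVertex r (srcFin r s p.2))}

omit [MeasurableSpace V] [T2Space V] [T2Space E] [LocallyCompactSpace V] [LocallyCompactSpace E]
  [SecondCountableTopology V] [SecondCountableTopology E] in
lemma measurableSet_carrier (hs : Continuous s) (n : ℕ) : MeasurableSet (carrier r s n) := by
  have hl := (continuous_len r s).measurable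
  have : {p : FinPath r s | p.1 < n → ¬ RegularVertex r (srcFin r s p.2)} =
      ((fun p : FinPath r s => p.1) ⁻¹' Iio n)ᶜ ∪
        ((fun p : FinPath r s => srcFin r s p.2) ⁻¹' {v | RegularVertex r v})ᶜ := by
    ext p
    simp only [mem_ofPred_eq, mem_union, mem_compl_iff, mem_preimage, mem_Iio]
    tauto
  have h2 : MeasurableSet {p : FinPath r s | p.1 < n → ¬ RegularVertex r (srcFin r s p.2)} := by
    rw [this]
    exact (hl measurableSet_Iio).compl.union
      (((isOpen_regularVertex r).preimage (continuous_src hs)).measurableSet.compl)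
  exact (hl (measurableSet_Iic (a := n))).inter h2

include hr hs hWo hWi

lemma pathMeas_compl_carrier [BorelSpace V] (hm : m {v | RegularVertex r v} = 0) (n : ℕ) :
    pathMeas r s W c μ m n (carrier r s n)ᶜ = 0 := by
  have hv := (continuous_vtx r s).measurable
  induction n with
  | zero =>
    rw [pathMeas, Measure.map_apply hv (measurableSet_carrier hs 0).compl]
    convert measure_empty (μ := μ)
    refine eq_empty_iff_forall_notMem.2 fun v hv => hv ⟨le_rfl, fun h => absurd h (lt_irrefl _)⟩
  | succ n ih =>
    rw [pathMeas, Measure.add_apply, Measure.smul_apply,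
      Measure.map_apply hv (measurableSet_carrier hs _).compl]
    have h1 : m (vtx r s ⁻¹' (carrier r s (n + 1))ᶜ) = 0 := by
      refine measure_mono_null (fun v hv => ?_) hm
      by_contra h
      exact hv ⟨Nat.zero_le _, fun _ => h⟩
    have h2 : shiftPull r s W (pathMeas r s W c μ m n) (carrier r s (n + 1))ᶜ = 0 := by
      have hsub : (carrier r s (n + 1))ᶜ ⊆
          (⋃ i, startSet r s (W i))ᶜ ∪ shiftF r s ⁻¹' (carrier r s n)ᶜ := by
        intro p hp
        by_contra hcon
        simp only [mem_union, not_or, mem_compl_iff, not_not, mem_preimage, mem_iUnion] at hcon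
        obtain ⟨⟨i, hi⟩, h2⟩ := hcon
        obtain ⟨e, q, h, rfl⟩ := exists_cons r s (one_le_len_of_mem_startSet hi)
        rw [shiftF_cons] at h2
        refine hp ⟨?_, fun hlt => ?_⟩
        · rw [len_cons]
          exact Nat.succ_le_succ h2.1
        · rw [len_cons] at hlt
          rw [src_cons]
          exact h2.2 (by omega)
      refine measure_mono_null hsub (measure_union_null ?_ ?_)
      · exact pull_compl (measurableSet_shiftF_image hr hs)
          (fun i => (isOpen_startSet (hWo i)).measurableSet) (fun i => injOn_shiftF (hWi i)) _
      · exact pull_preimage_null (measurableSet_shiftF_image hr hs)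
          (continuous_shiftF hs).measurable
          (fun i => (isOpen_startSet (hWo i)).measurableSet) (fun i => injOn_shiftF (hWi i)) _
          (measurableSet_carrier hs n).compl ih
    rw [h1, h2, smul_zero, add_zero]

include hWu

/-- The restriction of `μₙ` to `Eⁿ` is locally finite. -/
lemma exists_open_pathMeas_lt_top [BorelSpace V] [IsLocallyFiniteMeasure μ] (hc : c ≠ ∞) (n : ℕ)
    (p : FinPath r s) (hp : p.1 = n) :
    ∃ O : Set (FinPath r s), IsOpen O ∧ p ∈ O ∧ (∀ q ∈ O, q.1 = n) ∧
      pathMeas r s W c μ m n O < ∞ := by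
  induction n generalizing p with
  | zero =>
    obtain ⟨v, rfl⟩ := exists_vtx r s hp
    obtain ⟨A, hvA, hA, hAf⟩ := μ.exists_isOpen_measure_lt_top v
    have hO : IsOpen ((fun p : FinPath r s => p.1) ⁻¹' {0} ∩
        (fun p : FinPath r s => rngFin r s p.2) ⁻¹' A) :=
      ((isOpen_discrete _).preimage (continuous_len r s)).inter (hA.preimage (continuous_rng hr))
    refine ⟨_, hO, ⟨rfl, hvA⟩, fun q hq => hq.1, ?_⟩
    rw [pathMeas, Measure.map_apply (continuous_vtx r s).measurable hO.measurableSet]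
    exact (measure_mono fun w hw => hw.2).trans_lt hAf
  | succ n ih =>
    obtain ⟨e, q, h, rfl⟩ := exists_cons r s (show 1 ≤ p.1 by omega)
    rw [len_cons] at hp
    obtain ⟨O, hO, hqO, hOn, hOf⟩ := ih q (by omega)
    obtain ⟨i, hi⟩ := mem_iUnion.1 (hWu ▸ mem_univ e)
    have hO' := (isOpen_startSet (r := r) (s := s) (hWo i)).inter
      (hO.preimage (continuous_shiftF hs))
    refine ⟨_, hO', ⟨mem_startSet_cons.2 hi, ?_⟩, fun p hp => ?_, ?_⟩
    · rwa [mem_preimage, shiftF_cons]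
    · have h1 := one_le_len_of_mem_startSet hp.1
      have h2 := hOn _ hp.2
      rw [len_shiftF] at h2
      omega
    · rw [pathMeas_apply hr hs hWo hWi hWu n hO'.measurableSet
        ((injOn_shiftF (hWi i)).mono inter_subset_left)
        fun p hp => one_le_len_of_mem_startSet hp.1]
      refine ENNReal.mul_lt_top hc.lt_top ((measure_mono ?_).trans_lt hOf)
      rintro _ ⟨p, hp, rfl⟩
      exact hp.2

end PathMeasures

/-! ### The measures on the boundary path spaces -/

section BoundaryMeasures

open Filter
open scoped Topology ENNReal

variable {V E : Type u} {r s : E → V} [TopologicalSpace V] [TopologicalSpace E]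

instance {n : ℕ} : BorelSpace (BPathN r s n) := ⟨rfl⟩

variable (r s) in
/-- The inclusion of `∂Eₙ` into `E*`. It is a named map because it is not the inclusion of a
topological subspace. -/
def incl (n : ℕ) (x : BPathN r s n) : FinPath r s := x.val

lemma incl_injective (n : ℕ) : Function.Injective (incl r s n) := Subtype.val_injective

lemma range_incl (n : ℕ) :
    range (incl r s n) = carrier r s n :=
  Subtype.range_val

lemma ZNSet_eq_preimage (n : ℕ) (S : Set (FinPath r s)) : ZNSet r s n S =
    incl r s _ ⁻¹' ⋃ k, ({p : FinPath r s | k ≤ p.1} ∩ trunc r s k ⁻¹' S) := by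
  ext x
  rw [mem_ZNSet, mem_preimage, mem_iUnion]
  exact exists_congr fun _ => Iff.rfl

lemma incl_rho (n : ℕ) (x : BPathN r s (n + 1)) :
    incl r s n (rho r s n x) = trunc r s n (incl r s (n + 1) x) := by
  by_cases h : x.val.1 = n + 1
  · exact (congrArg (incl r s n) (dif_pos h)).trans
      (ftrunc_eq_trunc r s _ _ (show n ≤ x.val.1 by omega))
  · have hx := x.property.1
    exact (congrArg (incl r s n) (dif_neg h)).trans
      (trunc_of_le r s (show x.val.1 ≤ n by omega)).symm

variable [T2Space V] [T2Space E] [LocallyCompactSpace V] [LocallyCompactSpace E]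
  [SecondCountableTopology V] [SecondCountableTopology E]

/-- Although `∂Eₙ` does not carry the subspace topology of `E*`, it does carry the subspace
Borel structure. -/
lemma measurableEmbedding_incl (hr : Continuous r) (hs : Continuous s) (n : ℕ) :
    MeasurableEmbedding (incl r s n) := by
  have hl := continuous_len r s
  have hIci : ∀ k, IsOpen {p : FinPath r s | k ≤ p.1} := fun k =>
    (isOpen_discrete (Ici k)).preimage hl
  have hZ : ∀ S : Set (FinPath r s), MeasurableSet S →
      MeasurableSet (⋃ k, ({p : FinPath r s | k ≤ p.1} ∩ trunc r s k ⁻¹' S)) := fun S hS =>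
    MeasurableSet.iUnion fun k =>
      (hIci k).measurableSet.inter ((continuous_trunc hr k).measurable hS)
  refine ⟨(incl_injective _), measurable_of_isOpen fun U hU => ?_, fun {B} hB => ?_⟩
  · have h1 : incl r s n ⁻¹' U =
        ⋃ k, (ZNSet r s n (U ∩ {p | p.1 = k}) \ ZNSet r s n {p | p.1 = k + 1}) := by
      ext x
      rw [mem_iUnion]
      constructor
      · refine fun hx => ⟨x.val.1, mem_ZNSet_self ⟨hx, rfl⟩, fun h => ?_⟩
        obtain ⟨k, hk, h⟩ := mem_ZNSet.1 h
        have h : (trunc r s k x.val).1 = x.val.1 + 1 := h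
        rw [len_trunc] at h
        omega
      · rintro ⟨k, h1, h2⟩
        obtain ⟨l, hl, hlU, hlk⟩ := mem_ZNSet.1 h1
        have hlk : (trunc r s l x.val).1 = k := hlk
        rw [len_trunc, min_eq_left hl] at hlk
        have h3 : ¬ k + 1 ≤ x.val.1 := fun hk =>
          h2 (mem_ZNSet.2 ⟨k + 1, hk, (len_trunc r s _ _).trans (min_eq_left hk)⟩)
        rwa [trunc_of_le r s (show x.val.1 ≤ l by omega)] at hlU
    have hk : ∀ k, IsOpen {p : FinPath r s | p.1 = k} := fun k =>
      (isOpen_discrete {k}).preimage hl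
    rw [h1]
    exact MeasurableSet.iUnion fun k => (isOpen_ZNSet (hU.inter (hk k))).measurableSet.diff
      (isOpen_ZNSet (hk (k + 1))).measurableSet
  · have := secondCountable_boundary (n := n) hr hs
    have hle : instMeasBPathN r s n ≤ MeasurableSpace.comap (incl r s n) inferInstance := by
      have e : instMeasBPathN r s n = _ := borel_eq_generateFrom_of_subbasis
        (show instTopBPathN r s n = TopologicalSpace.generateFrom _ from rfl)
      rw [e]
      refine MeasurableSpace.generateFrom_le ?_
      rintro _ ⟨U, K, hU, hK, rfl⟩
      rw [ZNSet_eq_preimage, ZNSet_eq_preimage, ← preimage_sdiff]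
      exact ⟨_, (hZ U hU.measurableSet).diff (hZ K hK.measurableSet), rfl⟩
    obtain ⟨B', hB', rfl⟩ := hle B hB
    rw [image_preimage_eq_inter_range, range_incl]
    exact hB'.inter (measurableSet_carrier hs n)

lemma measurable_rho (hr : Continuous r) (hs : Continuous s) (n : ℕ) :
    Measurable (rho r s n) := by
  rw [← (measurableEmbedding_incl hr hs n).measurable_comp_iff]
  have : incl r s _ ∘ rho r s n = trunc r s n ∘ incl r s _ := funext (incl_rho n)
  rw [this]
  exact (continuous_trunc hr n).measurable.comp (measurableEmbedding_incl hr hs (n + 1)).measurable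

variable [MeasurableSpace V] [BorelSpace V] [MeasurableSpace E] [BorelSpace E]

omit [T2Space V] [T2Space E] [LocallyCompactSpace V] [LocallyCompactSpace E]
  [SecondCountableTopology V] [SecondCountableTopology E] [MeasurableSpace E] [BorelSpace E] in

/-- The part of a `σ`-finite `μ` left over by `c Tμ ≤ μ` gives no mass to the regular
vertices when `c Tμ = μ` there. -/
lemma exists_defect {μ T : Measure V} [SigmaFinite μ] {c : ℝ≥0∞} (hle : c • T ≤ μ)
    (heq : ∀ B : Set V, MeasurableSet B → (∀ v ∈ B, RegularVertex r v) → c * T B = μ B) :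
    ∃ m : Measure V, m + c • T = μ ∧ m {v | RegularVertex r v} = 0 := by
  obtain ⟨m, hm⟩ := exists_add_eq hle
  refine ⟨m, hm, ?_⟩
  have hR : MeasurableSet {v | RegularVertex r v} := (isOpen_regularVertex r).measurableSet
  have h1 : {v | RegularVertex r v} = ⋃ i, {v | RegularVertex r v} ∩ spanningSets μ i := by
    rw [← inter_iUnion, iUnion_spanningSets, inter_univ]
  rw [h1, measure_iUnion_null_iff]
  intro i
  have hB := hR.inter (measurableSet_spanningSets μ i)
  have h2 := heq _ hB fun v hv => hv.1
  have h3 := DFunLike.congr_fun hm ({v | RegularVertex r v} ∩ spanningSets μ i)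
  rw [Measure.add_apply, Measure.smul_apply, smul_eq_mul, h2] at h3
  have hfin : μ ({v | RegularVertex r v} ∩ spanningSets μ i) ≠ ∞ :=
    ((measure_mono inter_subset_right).trans_lt (measure_spanningSets_lt_top μ i)).ne
  exact (ENNReal.add_left_inj hfin).1 (h3.trans (zero_add _).symm)

variable {W : ℕ → Set E} (hr : Continuous r) (hs : Continuous s) (hWo : ∀ i, IsOpen (W i))
  (hWi : ∀ i, InjOn s (W i)) (hWu : ⋃ i, W i = univ)
  {c : ℝ≥0∞} {μ m : Measure V} {sμ : Measure E}

include hr hs hWo hWi hWu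

lemma pathMeas_trunc_preimage (hpull : IsPullback s sμ μ) (hm : m + c • sμ.map r = μ) {k n : ℕ}
    (hkn : k ≤ n) {B : Set (FinPath r s)} (hB : MeasurableSet B) :
    pathMeas r s W c μ m n (trunc r s k ⁻¹' B) = pathMeas r s W c μ m k (trunc r s k ⁻¹' B) := by
  induction n, hkn using Nat.le_induction with
  | base => rfl
  | succ n hkn ih =>
    rw [← ih, ← map_trunc_pathMeas hr hs hWo hWi hWu hpull hm n,
      Measure.map_apply (continuous_trunc hr n).measurable ((continuous_trunc hr k).measurable hB)]
    congr 1
    ext p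
    rw [mem_preimage, mem_preimage, mem_preimage, trunc_trunc r s hkn]

lemma regular_comap_pathMeas [IsLocallyFiniteMeasure μ] (hc : c ≠ ∞)
    (hpull : IsPullback s sμ μ) (hm : m + c • sμ.map r = μ)
    (hm0 : m {v | RegularVertex r v} = 0) (n : ℕ) :
    ((pathMeas r s W c μ m n).comap (incl r s n)).Regular := by
  have hemb := measurableEmbedding_incl hr hs n
  have := secondCountable_boundary (n := n) hr hs
  have := locallyCompact_boundary (n := n) hr hs
  have := t2_boundary (n := n) hr hs
  have := TopologicalSpace.metrizableSpace_of_t3_secondCountable (BPathN r s n)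
  have : IsLocallyFiniteMeasure
      ((pathMeas r s W c μ m n).comap (incl r s n)) := by
    refine ⟨fun x => ?_⟩
    obtain ⟨O, hO, hxO, hOk, hOf⟩ :=
      exists_open_pathMeas_lt_top hr hs hWo hWi hWu (m := m) (μ := μ) hc _ x.val rfl
    refine ⟨_, (isOpen_ZNSet hO).mem_nhds (mem_ZNSet_self hxO), ?_⟩
    rw [hemb.comap_apply]
    have h1 : incl r s _ '' ZNSet r s n O ⊆ trunc r s x.val.1 ⁻¹' O := by
      rintro _ ⟨y, hy, rfl⟩
      obtain ⟨l, hl, hyl⟩ := mem_ZNSet.1 hy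
      have h2 := hOk _ hyl
      rw [len_trunc, min_eq_left hl] at h2
      exact h2 ▸ hyl
    refine (measure_mono h1).trans_lt ?_
    rw [pathMeas_trunc_preimage hr hs hWo hWi hWu hpull hm x.property.1 hO.measurableSet]
    have h3 : trunc r s x.val.1 ⁻¹' O ⊆ O ∪ (carrier r s x.val.1)ᶜ := by
      intro p hp
      by_cases h : p ∈ carrier r s x.val.1
      · rw [mem_preimage, trunc_of_le r s h.1] at hp
        exact Or.inl hp
      · exact Or.inr h
    refine (measure_mono h3).trans_lt ((measure_union_le _ _).trans_lt ?_)
    rw [pathMeas_compl_carrier hr hs hWo hWi hm0, add_zero]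
    exact hOf
  infer_instance

omit hWu
omit [MeasurableSpace E] [BorelSpace E] in
/-- Since `μₙ` is carried by `∂Eₙ`, restricting it to `∂Eₙ` loses nothing. -/
lemma comap_pathMeas_preimage (hm0 : m {v | RegularVertex r v} = 0) (n : ℕ)
    (S : Set (FinPath r s)) :
    (pathMeas r s W c μ m n).comap (incl r s n)
      (incl r s _ ⁻¹' S) = pathMeas r s W c μ m n S := by
  rw [(measurableEmbedding_incl hr hs n).comap_apply, image_preimage_eq_inter_range,
    range_incl, measure_inter_conull (pathMeas_compl_carrier hr hs hWo hWi hm0 n)]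

include hWu

lemma map_rho_comap_pathMeas (hpull : IsPullback s sμ μ) (hm : m + c • sμ.map r = μ)
    (hm0 : m {v | RegularVertex r v} = 0) (n : ℕ) :
    ((pathMeas r s W c μ m (n + 1)).comap (incl r s (n + 1))).map (rho r s n) =
    (pathMeas r s W c μ m n).comap (incl r s n) := by
  have hemb := measurableEmbedding_incl hr hs n
  ext B hB
  have h1 : rho r s n ⁻¹' B = incl r s _ ⁻¹' (trunc r s n ⁻¹' (incl r s _ '' B)) := by
    ext x
    rw [mem_preimage, mem_preimage, mem_preimage, ← incl_rho,
      (incl_injective _).mem_set_image]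
  rw [Measure.map_apply (measurable_rho hr hs n) hB, h1,
    comap_pathMeas_preimage hr hs hWo hWi hm0, hemb.comap_apply,
    ← Measure.map_apply (continuous_trunc hr n).measurable (hemb.measurableSet_image.2 hB),
    map_trunc_pathMeas hr hs hWo hWi hWu hpull hm]

end BoundaryMeasures

/-- given a `β`-sub-invariant regular Borel measure `μ` on `E⁰` (with `s*μ`
the pullback along `s` and `Tμ = r_*(s*μ)`), the recursively defined measures
`μₙ = e^{-β} σ*μₙ₋₁ + μ|_{E⁰_sng} - e^{-β}(Tμ)|_{E⁰_sng}` on the `n`-th boundary path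
spaces `∂Eₙ` exist, are regular Borel measures, start at `μ₀ = μ`, and satisfy
`(ρₙ)_* μₙ = μₙ₋₁`.  (The recursion is expressed by: on Borel sets of non-vertex paths
inside injectivity opens of `σ`, `μₙ₊₁(B) = e^{-β} μₙ(σ(B))`; on Borel sets `B` of
singular vertices, `μₙ₊₁(B) + e^{-β}(Tμ)(B) = μ(B)`.) -/
theorem stmt16 {V E : Type u} (r s : E → V) [TopologicalSpace V] [TopologicalSpace E]
    [T2Space V] [T2Space E] [LocallyCompactSpace V] [LocallyCompactSpace E]
    [SecondCountableTopology V] [SecondCountableTopology E]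
    [MeasurableSpace V] [BorelSpace V] [MeasurableSpace E] [BorelSpace E]
    (hr : Continuous r) (hs : IsLocalHomeomorph s)
    (β : ℝ) (μ : Measure V) (hμ : μ.Regular)
    (sμ : Measure E) (hsμ : sμ.Regular) (hpull : IsPullback s sμ μ)
    (hsub : Measure.map r sμ ≤ ENNReal.ofReal (Real.exp β) • μ)
    (heq : ∀ B : Set V, MeasurableSet B → (∀ v ∈ B, RegularVertex r v) →
      Measure.map r sμ B = ENNReal.ofReal (Real.exp β) * μ B) :
    ∃ μseq : (n : ℕ) → Measure (BPathN r s n),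
      (∀ n, (μseq n).Regular) ∧
      (∀ B : Set V, MeasurableSet B →
        μseq 0 {x : BPathN r s 0 | ∃ v ∈ B, x.val = Sigma.mk 0 (v : PathN r s 0)} = μ B) ∧
      (∀ n, ∀ U : Set (BPathN r s (n + 1)), IsOpen U → (∀ x ∈ U, 1 ≤ x.val.1) →
        Set.InjOn (fun x : BPathN r s (n + 1) => shiftF r s x.val) U →
        ∀ B : Set (BPathN r s (n + 1)), B ⊆ U → MeasurableSet B →
          μseq (n + 1) B = ENNReal.ofReal (Real.exp (-β)) *
            μseq n (Subtype.val ⁻¹' (shiftF r s '' (Subtype.val '' B)))) ∧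
      (∀ n, ∀ B : Set V, MeasurableSet B → (∀ v ∈ B, ¬ RegularVertex r v) →
        μseq (n + 1) {x : BPathN r s (n + 1) | ∃ v ∈ B, x.val = Sigma.mk 0 (v : PathN r s 0)} +
          ENNReal.ofReal (Real.exp (-β)) * Measure.map r sμ B = μ B) ∧
      (∀ n, Measure.map (rho r s n) (μseq (n + 1)) = μseq n) := by
  obtain ⟨W, hWo, hWi, hWu⟩ := exists_injective_cover hs
  set c := ENNReal.ofReal (Real.exp (-β)) with hc
  have hc1 : c * ENNReal.ofReal (Real.exp β) = 1 := by
    rw [hc, ← ENNReal.ofReal_mul (Real.exp_nonneg _), ← Real.exp_add, neg_add_cancel,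
      Real.exp_zero, ENNReal.ofReal_one]
  have hle : c • sμ.map r ≤ μ := by
    intro B
    have h1 := hsub B
    rw [Measure.smul_apply, smul_eq_mul] at h1 ⊢
    calc c * sμ.map r B ≤ c * (ENNReal.ofReal (Real.exp β) * μ B) := by gcongr
      _ = μ B := by rw [← mul_assoc, hc1, one_mul]
  obtain ⟨m, hm, hm0⟩ := exists_defect (r := r) hle fun B hB hreg => by
    rw [heq B hB hreg, ← mul_assoc, hc1, one_mul]
  have hs' := hs.continuous
  have hv := (continuous_vtx r s).measurable
  have hinj : Function.Injective (vtx r s) := fun v w h => eq_of_heq (Sigma.mk.inj h).2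
  have hset : ∀ n (B : Set V),
      {x : BPathN r s n | ∃ v ∈ B, x.val = Sigma.mk 0 (v : PathN r s 0)} =
        incl r s n ⁻¹' (vtx r s '' B) := by
    intro n B
    ext x
    exact ⟨fun ⟨v, hv, h⟩ => ⟨v, hv, h.symm⟩, fun ⟨v, hv, h⟩ => ⟨v, hv, h.symm⟩⟩
  have hvB : ∀ B : Set V, vtx r s '' B =
      (fun p : FinPath r s => p.1) ⁻¹' {0} ∩ (fun p : FinPath r s => rngFin r s p.2) ⁻¹' B := by
    intro B
    ext p
    constructor
    · rintro ⟨v, hv, rfl⟩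
      exact ⟨rfl, hv⟩
    · rintro ⟨h0, hp⟩
      obtain ⟨v, rfl⟩ := exists_vtx r s h0
      exact ⟨v, hp, rfl⟩
  have hvBm : ∀ B : Set V, MeasurableSet B → MeasurableSet (vtx r s '' B) := by
    intro B hB
    rw [hvB]
    exact ((continuous_len r s).measurable (measurableSet_singleton 0)).inter
      ((continuous_rng hr).measurable hB)
  refine ⟨fun n => (pathMeas r s W c μ m n).comap (incl r s n),
    regular_comap_pathMeas hr hs' hWo hWi hWu ENNReal.ofReal_ne_top hpull hm hm0, ?_, ?_, ?_,
    map_rho_comap_pathMeas hr hs' hWo hWi hWu hpull hm hm0⟩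
  · intro B hB
    beta_reduce
    rw [hset, comap_pathMeas_preimage hr hs' hWo hWi hm0, pathMeas,
      Measure.map_apply hv (hvBm B hB), preimage_image_eq _ hinj]
  · intro n U _ hU1 hUi B hBU hB
    have hemb := measurableEmbedding_incl hr hs' (n + 1)
    change (pathMeas r s W c μ m (n + 1)).comap (incl r s (n + 1)) B = c *
      (pathMeas r s W c μ m n).comap (incl r s n)
        (incl r s n ⁻¹' (shiftF r s '' (incl r s (n + 1) '' B)))
    rw [comap_pathMeas_preimage hr hs' hWo hWi hm0, hemb.comap_apply]
    refine pathMeas_apply hr hs' hWo hWi hWu n (hemb.measurableSet_image.2 hB) ?_ ?_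
    · rintro _ ⟨x, hx, rfl⟩ _ ⟨y, hy, rfl⟩ hxy
      rw [hUi (hBU hx) (hBU hy) hxy]
    · rintro _ ⟨x, hx, rfl⟩
      exact hU1 x (hBU hx)
  · intro n B hB _
    beta_reduce
    rw [hset, comap_pathMeas_preimage hr hs' hWo hWi hm0,
      pathMeas_vtx hr hs' hWo hWi hWu n (hvBm B hB) (by rintro _ ⟨v, _, rfl⟩; rfl),
      preimage_image_eq _ hinj]
    exact DFunLike.congr_fun hm B

end TopGraph
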